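/- (Poisson kernel formula) Let λ > 0 with 2λ ∈ ℤ. For ϑ, φ ∈ [0,π] with cos ϑ + cos φ > 0 and −1 < t < 1, the Poisson kernel of the Gegenbauer polynomials P_λ(t,ϑ,φ) = Σ_{n=0}^∞ (n!(n+λ)/Γ(n+2λ)) C̃_n^λ(cos ϑ) C̃_n^λ(cos φ) t^n satisfies P_λ(t,ϑ,φ) = (π/2^{8λ−4}) ((cos ϑ + cos φ)/2)^{−2λ} (θ_t + λ)[(1+t)^{−2λ} I_{2λ−1,2λ−1}(−t,ϑ,φ)], where θ_t = t ∂/∂t and I_{μ,ν}(s,ϑ,φ) = ∫₀^∞ Ĩ_{μ/2}(sx/(1−s)) K̃_{ν/2}(x/(1−s)) J̃_{μ/2}(ax) J̃_{ν/2}(bx) x^{μ+ν+1} dx with a = sin ϑ/(cos ϑ + cos φ) and b = sin φ/(cos ϑ + cos φ). -/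

import Mathlib

open MeasureTheory Real Filter Set Metric

noncomputable section

/-- Normalized Bessel function of the first kind: `J̃_α(x) = (x/2)^{-α} J_α(x)`,
given by its (entire) power series. -/
def besselJt (α x : ℝ) : ℝ :=
  ∑' m : ℕ, (-1) ^ m / (m.factorial * Real.Gamma (m + α + 1)) * (x / 2) ^ (2 * m)

/-- Bessel function of the first kind `J_α`. -/
def besselJ (α x : ℝ) : ℝ :=
  ∑' m : ℕ, (-1) ^ m / (m.factorial * Real.Gamma (m + α + 1)) * (x / 2) ^ (2 * (m : ℝ) + α)

/-- Normalized modified Bessel function `Ĩ_α(x) = (x/2)^{-α} I_α(x)`,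
given by its (entire, even) power series. -/
def besselIt (α x : ℝ) : ℝ :=
  ∑' m : ℕ, (x / 2) ^ (2 * m) / (m.factorial * Real.Gamma (m + α + 1))

/-- Modified Bessel function of the first kind `I_α`. -/
def besselI (α x : ℝ) : ℝ :=
  ∑' m : ℕ, (x / 2) ^ (2 * (m : ℝ) + α) / (m.factorial * Real.Gamma (m + α + 1))

/-- Modified Bessel function of the second kind,
`K_α(x) = lim_{β→α} (π/2)(I_{−β}(x) − I_β(x))/sin(βπ)`. -/
def besselK (α x : ℝ) : ℝ :=
  limUnder (nhdsWithin α {α}ᶜ) fun β =>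
    Real.pi / 2 * (besselI (-β) x - besselI β x) / Real.sin (β * Real.pi)

/-- Normalized K-Bessel function `K̃_α(x) = (x/2)^{-α} K_α(x)`. -/
def besselKt (α x : ℝ) : ℝ := (x / 2) ^ (-α) * besselK α x

/-- Normalized Gegenbauer polynomial `C̃_n^λ = Γ(λ) C_n^λ`, where `C_n^λ` is defined via the
generating function `(1 − 2xt + t²)^{−λ} = Σ_{n≥0} C_n^λ(x) tⁿ`; explicitly,
`C̃_n^λ(x) = Σ_{k=0}^{⌊n/2⌋} (−1)^k Γ(λ+n−k)/(k!(n−2k)!) (2x)^{n−2k}`.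
This expression also gives the limit value `C̃_n^0 = lim_{λ→0+} Γ(λ) C_n^λ` for `n ≥ 1`. -/
def gegenbauerCt (n : ℕ) (l x : ℝ) : ℝ :=
  ∑ k ∈ Finset.range (n / 2 + 1),
    (-1) ^ k * Real.Gamma (l + n - k) / (k.factorial * (n - 2 * k).factorial)
      * (2 * x) ^ (n - 2 * k)

/-- Laguerre polynomial `L_n^μ(x) = Σ_{k=0}^n (−1)^k binom(n+μ, n−k) x^k/k!`
(with nonnegative integer parameter `μ`). -/
def laguerreL (n μ : ℕ) (x : ℝ) : ℝ :=
  ∑ k ∈ Finset.range (n + 1),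
    (-1) ^ k * (Nat.choose (n + μ) (n - k)) * x ^ k / k.factorial

/-- The Euler operator `θ = x d/dx`. -/
def eulerOp (u : ℝ → ℝ) : ℝ → ℝ := fun x => x * deriv u x

/-- `(θ+c)(θ+c+ν)u − x² u`, i.e. the operator `Q_ν(θ+c)` applied to `u`. -/
def besselQ (ν c : ℝ) (u : ℝ → ℝ) : ℝ → ℝ := fun x =>
  eulerOp (fun y => eulerOp u y + (c + ν) * u y) x
    + c * (eulerOp u x + (c + ν) * u x) - x ^ 2 * u x

/-- The fourth order differential operator
`D_{μ,ν} = x^{−2}((θ+μ)(θ+μ+ν) − x²)(θ(θ+ν) − x²)`. -/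
def Dop (μ ν : ℝ) (u : ℝ → ℝ) : ℝ → ℝ := fun x =>
  besselQ ν μ (besselQ ν 0 u) x / x ^ 2

/-- The generating function
`G^{μ,ν}(t,x) = (1−t)^{−(μ+ν+2)/2} Ĩ_{μ/2}(tx/(1−t)) K̃_{ν/2}(x/(1−t))`. -/
def genFun (μ ν t x : ℝ) : ℝ :=
  (1 - t) ^ (-(μ + ν + 2) / 2) * besselIt (μ / 2) (t * x / (1 - t))
    * besselKt (ν / 2) (x / (1 - t))

/-- The eigenfunctions `Λ_j^{μ,ν}`, defined as the Taylor coefficients in `t` at `t = 0` of the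
generating function `G^{μ,ν}(t,x) = Σ_{j≥0} Λ_j^{μ,ν}(x) t^j`. -/
def LambdaF (μ ν : ℝ) (j : ℕ) (x : ℝ) : ℝ :=
  iteratedDeriv j (fun t => genFun μ ν t x) 0 / j.factorial

/-- The integrality condition: `μ ≥ ν ≥ −1` are integers of the same parity,
not both equal to `−1`. -/
def IntCond (μ ν : ℤ) : Prop :=
  -1 ≤ ν ∧ ν ≤ μ ∧ Even (μ - ν) ∧ ¬(μ = -1 ∧ ν = -1)

end

/-!
On a power series `θ_t + λ` multiplies the `n`-th coefficient by `n + λ`, so it suffices to show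
`∑ n! / Γ(n + 2λ) C̃_n(cos ϑ) C̃_n(cos φ) t ^ n = C (1 + t) ^ (-2λ) I(-t, ϑ, φ)`.

Let `μ` be the probability measure on `[-1, 1]` with density proportional to
`(1 - v ^ 2) ^ (λ - 1)`. On the left, Laplace's integral expresses `C̃_n(cos ϑ)` through the
`μ`-mean of `(X_v) ^ n`, where `X_v = cos ϑ + i v sin ϑ`, so the series is, up to a constant, the
`μ`-mean of the generating function `(1 - 2 (cos φ) t X_v + (t X_v) ^ 2) ^ (-λ)`.

On the right, the substitution `x ↦ (1 + t) x` turns `I(-t, ϑ, φ)` into the integral over the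
half-line of a `K`-Bessel weight against three spherical Bessel functions `S`, of frequencies `i t`,
`a` and `b`. Gegenbauer's product formula `S(κ x) S(a x) = ∫ S(g_v x) dμ(v)`, with
`g_v ^ 2 = κ ^ 2 + a ^ 2 - 2 κ a v`, merges two of them at a time. A single `S(g x)` integrates
against the weight to a multiple of `(1 + g ^ 2) ^ (-2λ)`, and the `μ`-mean of `(A + i B v) ^ (-2λ)`
is `(A ^ 2 + B ^ 2) ^ (-λ)`; this leaves one mean over `v`, whose integrand is the generating
function above times the power `-λ` of a constant. The frequencies `g_v` are complex, but they stay
in the strip `|Im g| ≤ |t| < 1` in which the weight, decaying like `exp (-x)`, dominates.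
-/

/-- The Gegenbauer (ultraspherical) probability measure on `[-1, 1]`, with density proportional to
`(1 - v ^ 2) ^ (l - 1)`: the image of the symmetric beta distribution under `x ↦ 2 * x - 1`. -/
noncomputable def gegenbauerMeasure (l : ℝ) : Measure ℝ :=
  (ProbabilityTheory.betaMeasure l l).map fun x => 2 * x - 1

section GegenbauerMeasure

variable {l : ℝ}

lemma isProbabilityMeasure_gegenbauerMeasure (hl : 0 < l) :
    IsProbabilityMeasure (gegenbauerMeasure l) :=
  have := ProbabilityTheory.isProbabilityMeasureBeta hl hl
  Measure.isProbabilityMeasure_map (by fun_prop)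

lemma ae_betaMeasure_mem_Ioo (a b : ℝ) :
    ∀ᵐ x ∂(ProbabilityTheory.betaMeasure a b), x ∈ Ioo (0 : ℝ) 1 := by
  rw [ProbabilityTheory.betaMeasure, ae_withDensity_iff
    (by unfold ProbabilityTheory.betaPDF; fun_prop)]
  refine Eventually.of_forall fun x hx => ?_
  by_contra h
  exact hx (by simp [ProbabilityTheory.betaPDF_eq, show ¬(0 < x ∧ x < 1) from h])

lemma ae_gegenbauerMeasure_mem_Icc (l : ℝ) : ∀ᵐ v ∂(gegenbauerMeasure l), v ∈ Icc (-1 : ℝ) 1 := by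
  refine (ae_map_iff (by fun_prop) (measurableSet_Icc (a := (-1 : ℝ)) (b := 1))).2 ?_
  filter_upwards [ae_betaMeasure_mem_Ioo l l] with x hx
  constructor <;> linarith [hx.1, hx.2]

variable {E : Type*} [NormedAddCommGroup E]

lemma aestronglyMeasurable_gegenbauerMeasure {g : ℝ → E} (hg : ContinuousOn g (Icc (-1) 1)) :
    AEStronglyMeasurable g (gegenbauerMeasure l) := by
  rw [← Measure.restrict_eq_self_of_ae_mem (ae_gegenbauerMeasure_mem_Icc l)]
  exact hg.aestronglyMeasurable measurableSet_Icc

lemma integrable_gegenbauerMeasure (hl : 0 < l) {g : ℝ → E} (hg : ContinuousOn g (Icc (-1) 1)) :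
    Integrable g (gegenbauerMeasure l) := by
  have := isProbabilityMeasure_gegenbauerMeasure hl
  obtain ⟨C, hC⟩ := isCompact_Icc.exists_bound_of_continuousOn hg
  refine .of_bound (aestronglyMeasurable_gegenbauerMeasure hg) C ?_
  filter_upwards [ae_gegenbauerMeasure_mem_Icc l] with v hv using hC v hv

variable [NormedSpace ℝ E]

lemma integral_gegenbauerMeasure {g : ℝ → E} (hl : 0 < l) (hg : ContinuousOn g (Icc (-1) 1)) :
    ∫ v, g v ∂(gegenbauerMeasure l) = (ProbabilityTheory.beta l l)⁻¹ •
        ∫ x in (0 : ℝ)..1, (x ^ (l - 1) * (1 - x) ^ (l - 1)) • g (2 * x - 1) := by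
  rw [gegenbauerMeasure, integral_map (by fun_prop) (aestronglyMeasurable_gegenbauerMeasure hg),
    ProbabilityTheory.betaMeasure, integral_withDensity_eq_integral_toReal_smul
      (by unfold ProbabilityTheory.betaPDF; fun_prop) (by simp [ProbabilityTheory.betaPDF]),
    ← setIntegral_eq_integral_of_forall_compl_eq_zero (s := Ioo (0 : ℝ) 1)
      fun x hx => by simp [ProbabilityTheory.betaPDF_eq, show ¬(0 < x ∧ x < 1) from hx],
    intervalIntegral.integral_of_le zero_le_one, integral_Ioc_eq_integral_Ioo, ← integral_smul]
  refine setIntegral_congr_fun measurableSet_Ioo fun x hx => ?_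
  have hβ := ProbabilityTheory.beta_pos hl hl
  have h0 := hx.1
  have h1 : 0 < 1 - x := sub_pos.2 hx.2
  rw [ProbabilityTheory.betaPDF_of_pos_lt_one hx.1 hx.2, ENNReal.toReal_ofReal (by positivity),
    smul_smul]
  congr 1
  ring

lemma intervalIntegrable_rpow_mul_one_sub_rpow (hl : 0 < l) :
    IntervalIntegrable (fun x : ℝ => x ^ (l - 1) * (1 - x) ^ (l - 1)) volume 0 1 := by
  have h := Complex.betaIntegral_convergent (u := l) (v := l) (by simpa) (by simpa)
  refine h.norm.congr fun x hx => ?_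
  rw [uIoc_of_le zero_le_one] at hx
  have h0 : (0 : ℝ) ≤ x := hx.1.le
  have h1 : (0 : ℝ) ≤ 1 - x := sub_nonneg.2 hx.2
  rw [← Complex.ofReal_one, ← Complex.ofReal_sub, ← Complex.ofReal_sub, ← Complex.ofReal_cpow h0,
    ← Complex.ofReal_cpow h1, ← Complex.ofReal_mul, Complex.norm_of_nonneg (by positivity)]

theorem integral_gegenbauerMeasure_byParts [CompleteSpace E] (hl : 0 < l) {g g' : ℝ → E}
    (hg : ∀ v ∈ Icc (-1 : ℝ) 1, HasDerivAt g (g' v) v) (hg' : ContinuousOn g' (Icc (-1) 1)) :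
    ∫ v, ((1 - v ^ 2) • g' v - (2 * l * v) • g v) ∂(gegenbauerMeasure l) = 0 := by
  have hgc : ContinuousOn g (Icc (-1) 1) := fun v hv => (hg v hv).continuousAt.continuousWithinAt
  have hmaps : MapsTo (fun x : ℝ => 2 * x - 1) (Icc 0 1) (Icc (-1) 1) := fun x hx =>
    ⟨by linarith [hx.1], by linarith [hx.2]⟩
  have hcont : ContinuousOn (fun v : ℝ => (1 - v ^ 2) • g' v - (2 * l * v) • g v) (Icc (-1) 1) := by
    fun_prop
  have hderiv : ∀ x ∈ Ioo (0 : ℝ) 1,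
      HasDerivAt (fun x : ℝ => (2 * (x * (1 - x)) ^ l) • g (2 * x - 1))
        ((x ^ (l - 1) * (1 - x) ^ (l - 1)) •
          ((1 - (2 * x - 1) ^ 2) • g' (2 * x - 1) - (2 * l * (2 * x - 1)) • g (2 * x - 1))) x := by
    intro x hx
    have h0 : 0 < x := hx.1
    have h1 : 0 < 1 - x := sub_pos.2 hx.2
    have hpos : 0 < x * (1 - x) := mul_pos h0 h1
    have hw : HasDerivAt (fun x : ℝ => x * (1 - x)) (1 - 2 * x) x :=
      ((hasDerivAt_id' x).mul ((hasDerivAt_id' x).const_sub 1)).congr_deriv (by ring)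
    have hv : HasDerivAt (fun x : ℝ => 2 * x - 1) 2 x := by
      simpa using ((hasDerivAt_id' x).const_mul 2).sub_const 1
    refine (((hw.rpow_const (p := l) (.inl hpos.ne')).const_mul 2).smul
      ((hg _ (hmaps (Ioo_subset_Icc_self hx))).scomp x hv)).congr_deriv ?_
    have hpow : (x * (1 - x)) ^ l = (x * (1 - x)) ^ (l - 1) * (x * (1 - x)) := by
      rw [← rpow_add_one hpos.ne', sub_add_cancel]
    rw [hpow, ← mul_rpow h0.le h1.le, Function.comp_apply]
    module
  rw [integral_gegenbauerMeasure hl hcont, intervalIntegral.integral_eq_sub_of_hasDerivAt_of_le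
    zero_le_one ?_ hderiv ?_]
  · simp [zero_rpow hl.ne']
  · have : Continuous fun x : ℝ => 2 * (x * (1 - x)) ^ l :=
      continuous_const.mul (Continuous.rpow_const (by fun_prop) fun _ => .inr hl.le)
    exact this.continuousOn.smul (hgc.comp (by fun_prop) hmaps)
  · refine (intervalIntegrable_rpow_mul_one_sub_rpow hl).smul_continuousOn ?_
    rw [uIcc_of_le zero_le_one]
    exact hcont.comp (by fun_prop) hmaps

lemma integral_id_gegenbauerMeasure (hl : 0 < l) : ∫ v, v ∂(gegenbauerMeasure l) = 0 := by
  have h := integral_gegenbauerMeasure_byParts hl (g := fun _ => (1 : ℝ)) (g' := fun _ => 0)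
    (fun v _ => hasDerivAt_const v _) continuousOn_const
  simp only [smul_eq_mul, mul_zero, zero_sub, mul_one, integral_neg] at h
  rw [integral_const_mul] at h
  simpa [hl.ne'] using h

lemma hasDerivAt_integral_gegenbauerMeasure {𝕜 : Type*} [RCLike 𝕜] [NormedSpace 𝕜 E] (hl : 0 < l)
    {U : Set 𝕜} (hU : IsOpen U) {F F' : 𝕜 → ℝ → E} {y : 𝕜} (hy : y ∈ U)
    (hF : ∀ y ∈ U, ∀ v ∈ Icc (-1 : ℝ) 1, HasDerivAt (fun y => F y v) (F' y v) y)
    (hFc : ∀ y ∈ U, ContinuousOn (F y) (Icc (-1) 1))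
    (hF' : ContinuousOn (Function.uncurry F') (U ×ˢ Icc (-1) 1)) :
    HasDerivAt (fun y => ∫ v, F y v ∂(gegenbauerMeasure l))
      (∫ v, F' y v ∂(gegenbauerMeasure l)) y := by
  have := isProbabilityMeasure_gegenbauerMeasure hl
  obtain ⟨ε, hε, hεU⟩ := nhds_basis_closedBall.mem_iff.1 (hU.mem_nhds hy)
  obtain ⟨C, hC⟩ := ((isCompact_closedBall y ε).prod isCompact_Icc).exists_bound_of_continuousOn
    (hF'.mono (prod_mono_left hεU))
  refine (hasDerivAt_integral_of_dominated_loc_of_deriv_le (bound := fun _ => C)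
    (closedBall_mem_nhds y hε) ?_ (integrable_gegenbauerMeasure hl (hFc y hy)) ?_ ?_
    (integrable_const C) ?_).2
  · filter_upwards [hU.mem_nhds hy] with z hz
    exact aestronglyMeasurable_gegenbauerMeasure (hFc z hz)
  · exact aestronglyMeasurable_gegenbauerMeasure
      (hF'.comp (f := fun v => (y, v)) (by fun_prop) fun v hv => ⟨hy, hv⟩)
  · filter_upwards [ae_gegenbauerMeasure_mem_Icc l] with v hv z hz using hC (z, v) ⟨hz, hv⟩
  · filter_upwards [ae_gegenbauerMeasure_mem_Icc l] with v hv z hz using hF z (hεU hz) v hv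

end GegenbauerMeasure

section LinearIntegral

variable {l : ℝ} {A B : ℂ}

lemma cpow_sub_one_mul_self {z : ℂ} (hz : z ∈ Complex.slitPlane) (c : ℂ) :
    z ^ (c - 1) * z = z ^ c := by
  have hz0 := Complex.slitPlane_ne_zero hz
  rw [Complex.cpow_sub _ _ hz0, Complex.cpow_one, div_mul_cancel₀ _ hz0]

lemma re_add_I_mul_mul_pos (hAB : |B.im| < A.re) {v : ℝ} (hv : v ∈ Icc (-1 : ℝ) 1) :
    0 < (A + Complex.I * B * v).re := by
  have hvB : |B.im * v| ≤ |B.im| := by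
    rw [abs_mul]
    exact mul_le_of_le_one_right (abs_nonneg _) (abs_le.2 hv)
  have := (abs_le.1 hvB).2
  simp only [Complex.add_re, Complex.mul_re, Complex.I_re, zero_mul, Complex.I_im, one_mul,
    zero_sub, Complex.ofReal_re, neg_mul, Complex.mul_im, zero_add, Complex.ofReal_im, mul_zero,
    sub_zero]
  linarith

lemma sq_add_sq_mem_slitPlane (hAB : |B.im| < A.re) : A ^ 2 + B ^ 2 ∈ Complex.slitPlane := by
  rw [Complex.mem_slitPlane_iff]
  by_contra! h
  obtain ⟨hre, him⟩ := h
  simp only [sq, Complex.add_re, Complex.add_im, Complex.mul_re, Complex.mul_im] at hre him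
  have hA : 0 < A.re := (abs_nonneg _).trans_lt hAB
  have hlt : 0 < A.re ^ 2 - B.im ^ 2 := by
    rw [sub_pos, ← sq_abs B.im]
    gcongr
  have hsq : A.re * A.im = -(B.re * B.im) := by linarith
  have hid : A.re ^ 2 * (A.re * A.re - A.im * A.im + (B.re * B.re - B.im * B.im))
      = (A.re ^ 2 - B.im ^ 2) * (A.re ^ 2 + B.re ^ 2) := by
    linear_combination (-A.re * A.im + B.re * B.im) * hsq
  have : 0 < (A.re ^ 2 - B.im ^ 2) * (A.re ^ 2 + B.re ^ 2) := by positivity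
  nlinarith [sq_nonneg A.re]

lemma hasDerivAt_linear_cpow_right (c : ℂ) (hAB : |B.im| < A.re) {v : ℝ}
    (hv : v ∈ Icc (-1 : ℝ) 1) :
    HasDerivAt (fun v : ℝ => (A + Complex.I * B * v) ^ c)
      (c * (A + Complex.I * B * v) ^ (c - 1) * (Complex.I * B)) v := by
  have h : HasDerivAt (fun z : ℂ => A + Complex.I * B * z) (Complex.I * B) v := by
    simpa using ((hasDerivAt_id' (v : ℂ)).const_mul (Complex.I * B)).const_add A
  exact (h.cpow_const (.inl (re_add_I_mul_mul_pos hAB hv))).comp_ofReal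

lemma hasDerivAt_linear_cpow_left (c : ℂ) (hAB : |B.im| < A.re) {v : ℝ}
    (hv : v ∈ Icc (-1 : ℝ) 1) :
    HasDerivAt (fun B : ℂ => (A + Complex.I * B * v) ^ c)
      (c * (A + Complex.I * B * v) ^ (c - 1) * (Complex.I * v)) B := by
  have h : HasDerivAt (fun B : ℂ => A + Complex.I * B * v) (Complex.I * v) B := by
    simpa using (((hasDerivAt_id' B).const_mul Complex.I).mul_const (v : ℂ)).const_add A
  exact h.cpow_const (.inl (re_add_I_mul_mul_pos hAB hv))

lemma continuousOn_linear_cpow (c : ℂ) :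
    ContinuousOn (fun q : ℂ × ℝ => (A + Complex.I * q.1 * q.2) ^ c)
      ({B : ℂ | |B.im| < A.re} ×ˢ Icc (-1) 1) :=
  ContinuousOn.cpow_const (by fun_prop) fun _ hq => .inl (re_add_I_mul_mul_pos hq.1 hq.2)

lemma continuousOn_linear_cpow_right (c : ℂ) (hAB : |B.im| < A.re) :
    ContinuousOn (fun v : ℝ => (A + Complex.I * B * v) ^ c) (Icc (-1) 1) :=
  (continuousOn_linear_cpow c).comp (f := fun v : ℝ => (B, v)) (by fun_prop) fun _ hv => ⟨hAB, hv⟩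

lemma hasDerivAt_integral_linear_cpow (hl : 0 < l) (c : ℂ) (hAB : |B.im| < A.re) :
    HasDerivAt (fun B : ℂ => ∫ v : ℝ, (A + Complex.I * B * v) ^ c ∂(gegenbauerMeasure l))
      (∫ v : ℝ, c * (A + Complex.I * B * v) ^ (c - 1) * (Complex.I * v) ∂(gegenbauerMeasure l))
      B := by
  refine hasDerivAt_integral_gegenbauerMeasure hl (U := {B : ℂ | |B.im| < A.re})
    (F' := fun B v => c * (A + Complex.I * B * v) ^ (c - 1) * (Complex.I * v))
    (isOpen_lt (by fun_prop) continuous_const) hAB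
    (fun B hB v hv => hasDerivAt_linear_cpow_left c hB hv)
    (fun B hB => continuousOn_linear_cpow_right c hB) ?_
  exact (continuousOn_const.mul (continuousOn_linear_cpow (c - 1))).mul (by fun_prop)

lemma sq_add_sq_mul_integral_deriv (hl : 0 < l) (hAB : |B.im| < A.re) :
    (A ^ 2 + B ^ 2) * ∫ v : ℝ, -(2 * l) * (A + Complex.I * B * v) ^ (-(2 * l : ℂ) - 1)
        * (Complex.I * v) ∂(gegenbauerMeasure l)
      = -(2 * l * B) *
        ∫ v : ℝ, (A + Complex.I * B * v) ^ (-(2 * l : ℂ)) ∂(gegenbauerMeasure l) := by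
  have hc := continuousOn_linear_cpow_right (-(2 * l : ℂ)) hAB
  have hc' := continuousOn_linear_cpow_right (-(2 * l : ℂ) - 1) hAB
  have hparts := integral_gegenbauerMeasure_byParts hl
    (fun v hv => hasDerivAt_linear_cpow_right (-(2 * l : ℂ)) hAB hv) (by fun_prop)
  rw [← sub_eq_zero, ← integral_const_mul, ← integral_const_mul, ← integral_sub
    (integrable_gegenbauerMeasure hl (by fun_prop))
    (integrable_gegenbauerMeasure hl (by fun_prop)), ← mul_zero (Complex.I * A), ← hparts,
    ← integral_const_mul]
  refine integral_congr_ae ?_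
  filter_upwards [ae_gegenbauerMeasure_mem_Icc l] with v hv
  have hslit : A + Complex.I * B * v ∈ Complex.slitPlane := .inl (re_add_I_mul_mul_pos hAB hv)
  simp only [← cpow_sub_one_mul_self hslit (-(2 * l)), Complex.real_smul]
  push_cast
  generalize (A + Complex.I * B * v) ^ (-(2 * l : ℂ) - 1) = Z
  linear_combination (2 * l * Z * A * B) * Complex.I_sq

theorem integral_linear_cpow (hl : 0 < l) (hAB : |B.im| < A.re) :
    ∫ v : ℝ, (A + Complex.I * B * v) ^ (-(2 * l : ℂ)) ∂(gegenbauerMeasure l)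
      = (A ^ 2 + B ^ 2) ^ (-(l : ℂ)) := by
  have hA : 0 < A.re := (abs_nonneg _).trans_lt hAB
  set U : Set ℂ := {B : ℂ | |B.im| < A.re}
  set Y : ℂ → ℂ := fun B => ∫ v : ℝ, (A + Complex.I * B * v) ^ (-(2 * l : ℂ)) ∂(gegenbauerMeasure l)
  have hderiv : ∀ B ∈ U, HasDerivAt (fun B => (A ^ 2 + B ^ 2) ^ (l : ℂ) * Y B) 0 B := by
    intro B hB
    have hslit := sq_add_sq_mem_slitPlane hB
    have hsq : HasDerivAt (fun B : ℂ => A ^ 2 + B ^ 2) (2 * B) B := by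
      simpa using (hasDerivAt_pow 2 B).const_add (A ^ 2)
    refine ((hsq.cpow_const (c := l) hslit).mul
      (hasDerivAt_integral_linear_cpow hl (-(2 * l : ℂ)) hB)).congr_deriv ?_
    rw [← cpow_sub_one_mul_self hslit l, mul_assoc _ (A ^ 2 + B ^ 2),
      sq_add_sq_mul_integral_deriv hl hB]
    ring
  have hU : IsOpen U := isOpen_lt (by fun_prop) continuous_const
  have hconn : IsPreconnected U := by
    have : Convex ℝ U := by
      rw [show U = Complex.imCLM ⁻¹' Ioo (-A.re) A.re by ext; simp [U, abs_lt]]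
      exact (convex_Ioo _ _).linear_preimage Complex.imCLM.toLinearMap
    exact this.isPreconnected
  have hconst : (A ^ 2 + B ^ 2) ^ (l : ℂ) * Y B = (A ^ 2 + 0 ^ 2) ^ (l : ℂ) * Y 0 :=
    hU.is_const_of_deriv_eq_zero hconn
      (fun B hB => (hderiv B hB).differentiableAt.differentiableWithinAt)
      (fun B hB => (hderiv B hB).deriv) hAB (show |(0 : ℂ).im| < A.re by simpa)
  have hone : (A ^ 2 + 0 ^ 2) ^ (l : ℂ) * Y 0 = 1 := by
    have := isProbabilityMeasure_gegenbauerMeasure hl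
    have harg := abs_lt.1 (Complex.abs_arg_lt_pi_div_two_iff.2 (.inl hA))
    have hA0 : A ≠ 0 := fun h => by simp [h] at hA
    simp only [Y, mul_zero, zero_mul, add_zero, integral_const, probReal_univ, one_smul, ne_eq,
      OfNat.ofNat_ne_zero, not_false_eq_true, zero_pow]
    rw [← Complex.cpow_ofNat_mul' (by linarith) (by linarith), ← Complex.cpow_add _ _ hA0]
    simp
  rw [Complex.cpow_neg, ← eq_inv_of_mul_eq_one_right (hconst.trans hone)]

end LinearIntegral

/-- The `k`-th summand of `gegenbauerCt n l x`, extended by zero to all `k` so that sums over `k`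
for different `n` can be compared. -/
noncomputable def gegenbauerTerm (l x : ℝ) (n k : ℕ) : ℝ :=
  if 2 * k ≤ n then (-1) ^ k * Real.Gamma (l + n - k) / (k.factorial * (n - 2 * k).factorial)
    * (2 * x) ^ (n - 2 * k) else 0

section GegenbauerPolynomial

variable {l : ℝ}

lemma gegenbauerTerm_two_mul_add (l x : ℝ) (k d : ℕ) : gegenbauerTerm l x (2 * k + d) k
    = (-1) ^ k * Real.Gamma (l + k + d) / (k.factorial * d.factorial) * (2 * x) ^ d := by
  have hΓ : l + ((2 * k + d : ℕ) : ℝ) - k = l + k + d := by push_cast; ring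
  rw [gegenbauerTerm, if_pos (by omega), hΓ, Nat.add_sub_cancel_left]

lemma gegenbauerTerm_of_lt {n k : ℕ} (h : n < 2 * k) (l x : ℝ) : gegenbauerTerm l x n k = 0 :=
  if_neg (by omega)

lemma gegenbauerCt_eq_sum (l x : ℝ) {n M : ℕ} (hM : n / 2 + 1 ≤ M) :
    gegenbauerCt n l x = ∑ k ∈ Finset.range M, gegenbauerTerm l x n k := by
  rw [gegenbauerCt, ← Finset.sum_subset (Finset.range_mono hM) fun k _ hk =>
    gegenbauerTerm_of_lt (by have := Finset.mem_range.not.1 hk; omega) l x]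
  refine Finset.sum_congr rfl fun k hk => ?_
  rw [gegenbauerTerm, if_pos (by have := Finset.mem_range.1 hk; omega)]

lemma gegenbauerTerm_zero_recurrence (hl : 0 < l) (x : ℝ) (n : ℕ) :
    (n + 2) * gegenbauerTerm l x (n + 2) 0
      = 2 * (n + 1 + l) * x * gegenbauerTerm l x (n + 1) 0 := by
  have h (d : ℕ) := gegenbauerTerm_two_mul_add l x 0 d
  simp only [mul_zero, zero_add, CharP.cast_eq_zero, add_zero] at h
  have hΓ : Real.Gamma (l + (n + 2 : ℕ)) = (l + n + 1) * Real.Gamma (l + (n + 1 : ℕ)) := by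
    rw [show l + ((n + 2 : ℕ) : ℝ) = (l + n + 1) + 1 by push_cast; ring,
      Gamma_add_one (by positivity)]
    push_cast
    ring_nf
  rw [h, h, hΓ, Nat.factorial_succ (n + 1)]
  push_cast
  field_simp
  ring

lemma gegenbauerTerm_succ_recurrence (hl : 0 < l) (x : ℝ) (n k : ℕ) :
    (n + 2) * gegenbauerTerm l x (n + 2) (k + 1)
      = 2 * (n + 1 + l) * x * gegenbauerTerm l x (n + 1) (k + 1)
        - (n + 2 * l) * gegenbauerTerm l x n k := by
  rcases lt_or_ge n (2 * k) with h | h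
  · simp [gegenbauerTerm_of_lt, h, show n + 2 < 2 * (k + 1) by omega,
      show n + 1 < 2 * (k + 1) by omega]
  obtain ⟨d, rfl⟩ := Nat.exists_eq_add_of_le h
  have hΓ : Real.Gamma (l + (k + 1 : ℕ) + d) = (l + k + d) * Real.Gamma (l + k + d) := by
    rw [← Gamma_add_one (by positivity)]
    push_cast
    ring_nf
  rw [show 2 * k + d + 2 = 2 * (k + 1) + d by ring, gegenbauerTerm_two_mul_add,
    gegenbauerTerm_two_mul_add, hΓ, Nat.factorial_succ k]
  rcases d with _ | d
  · rw [gegenbauerTerm_of_lt (by omega)]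
    push_cast
    field_simp
    ring
  · have hΓ' : l + (k + 1 : ℕ) + d = l + k + (d + 1 : ℕ) := by push_cast; ring
    rw [show 2 * k + (d + 1) + 1 = 2 * (k + 1) + d by ring, gegenbauerTerm_two_mul_add, hΓ',
      Nat.factorial_succ k, Nat.factorial_succ d]
    push_cast
    field_simp
    ring

theorem gegenbauerCt_recurrence (hl : 0 < l) (x : ℝ) (n : ℕ) :
    (n + 2) * gegenbauerCt (n + 2) l x = 2 * (n + 1 + l) * x * gegenbauerCt (n + 1) l x
      - (n + 2 * l) * gegenbauerCt n l x := by
  rw [gegenbauerCt_eq_sum l x (n := n + 2) (M := n + 3) (by omega),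
    gegenbauerCt_eq_sum l x (n := n + 1) (M := n + 3) (by omega),
    gegenbauerCt_eq_sum l x (n := n) (M := n + 2) (by omega),
    Finset.sum_range_succ', Finset.sum_range_succ' (gegenbauerTerm l x (n + 1)), mul_add, mul_add,
    gegenbauerTerm_zero_recurrence hl, Finset.mul_sum, Finset.mul_sum, Finset.mul_sum,
    add_sub_right_comm, ← Finset.sum_sub_distrib]
  exact congrArg (· + _) (Finset.sum_congr rfl fun k _ => gegenbauerTerm_succ_recurrence hl x n k)

/-- The integral in Laplace's representation of the Gegenbauer polynomials at `x = cos θ`, where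
`s = sin θ`. -/
noncomputable def laplaceIntegral (l x s : ℝ) (n : ℕ) : ℂ :=
  ∫ v : ℝ, ((x : ℂ) + Complex.I * s * v) ^ n ∂(gegenbauerMeasure l)

lemma laplaceIntegral_zero (hl : 0 < l) (x s : ℝ) : laplaceIntegral l x s 0 = 1 := by
  have := isProbabilityMeasure_gegenbauerMeasure hl
  simp [laplaceIntegral]

lemma laplaceIntegral_one (hl : 0 < l) (x s : ℝ) : laplaceIntegral l x s 1 = x := by
  have := isProbabilityMeasure_gegenbauerMeasure hl
  simp only [laplaceIntegral, pow_one]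
  rw [integral_add (integrable_const _) (integrable_gegenbauerMeasure hl (by fun_prop)),
    integral_const_mul, integral_complex_ofReal (f := fun v => v),
    integral_id_gegenbauerMeasure hl]
  simp

lemma laplaceIntegral_recurrence (hl : 0 < l) {x s : ℝ} (hxs : x ^ 2 + s ^ 2 = 1) (n : ℕ) :
    ((n : ℂ) + 1 + 2 * l) * laplaceIntegral l x s (n + 2)
      = 2 * (n + 1 + l) * x * laplaceIntegral l x s (n + 1)
        - (n + 1) * laplaceIntegral l x s n := by
  have hint : ∀ (c : ℂ) (m : ℕ),
      Integrable (fun v : ℝ => c * ((x : ℂ) + Complex.I * s * v) ^ m) (gegenbauerMeasure l) :=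
    fun c m => integrable_gegenbauerMeasure hl (by fun_prop)
  have hderiv (v : ℝ) : HasDerivAt (fun v : ℝ => ((x : ℂ) + Complex.I * s * v) ^ (n + 1))
      ((n + 1) * ((x : ℂ) + Complex.I * s * v) ^ n * (Complex.I * s)) v := by
    have h : HasDerivAt (fun v : ℝ => (x : ℂ) + Complex.I * s * v) (Complex.I * s) v := by
      simpa using ((hasDerivAt_id' v).ofReal_comp.const_mul (Complex.I * (s : ℂ))).const_add (x : ℂ)
    simpa using h.fun_pow (n + 1)
  have hparts := integral_gegenbauerMeasure_byParts hl (fun v _ => hderiv v) (by fun_prop)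
  unfold laplaceIntegral
  rw [← sub_eq_zero, ← integral_const_mul, ← integral_const_mul, ← integral_const_mul,
    ← integral_sub (hint _ _) (hint _ _), ← integral_sub (hint _ _)
      (integrable_gegenbauerMeasure hl (by fun_prop)), ← mul_zero (-Complex.I * (s : ℂ)), ← hparts,
    ← integral_const_mul]
  congr 1
  ext v
  have hxs' : (x : ℂ) ^ 2 + (s : ℂ) ^ 2 = 1 := by exact_mod_cast hxs
  simp only [Complex.real_smul]
  push_cast
  linear_combination (- (n + 1) * ((x : ℂ) + Complex.I * s * v) ^ n) * hxs' +
    (((x : ℂ) + Complex.I * s * v) ^ n * (n + 1) * (s : ℂ) ^ 2) * Complex.I_sq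

/-- The value of `gegenbauerCt n l` at `1`, which is the constant in Laplace's representation. -/
noncomputable def gegenbauerAtOne (n : ℕ) (l : ℝ) : ℝ :=
  Real.Gamma l * Real.Gamma (n + 2 * l) / (n.factorial * Real.Gamma (2 * l))

lemma gegenbauerAtOne_zero (hl : 0 < l) : gegenbauerAtOne 0 l = Real.Gamma l := by
  simp [gegenbauerAtOne, (Gamma_pos_of_pos (by positivity : 0 < 2 * l)).ne']

lemma gegenbauerAtOne_succ (hl : 0 < l) (n : ℕ) :
    (n + 1) * gegenbauerAtOne (n + 1) l = (n + 2 * l) * gegenbauerAtOne n l := by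
  have hΓ : Real.Gamma ((n + 1 : ℕ) + 2 * l) = (n + 2 * l) * Real.Gamma (n + 2 * l) := by
    rw [← Gamma_add_one (by positivity)]
    push_cast
    ring_nf
  have hΓ0 := (Gamma_pos_of_pos (by positivity : 0 < 2 * l)).ne'
  rw [gegenbauerAtOne, gegenbauerAtOne, hΓ, Nat.factorial_succ]
  push_cast
  field_simp

theorem gegenbauerCt_eq_laplaceIntegral (hl : 0 < l) {x s : ℝ} (hxs : x ^ 2 + s ^ 2 = 1) (n : ℕ) :
    (gegenbauerCt n l x : ℂ) = gegenbauerAtOne n l * laplaceIntegral l x s n := by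
  induction n using Nat.twoStepInduction with
  | zero => simp [laplaceIntegral_zero hl, gegenbauerAtOne_zero hl, gegenbauerCt]
  | one =>
    have hone : gegenbauerAtOne 1 l = 2 * l * Real.Gamma l := by
      simpa [gegenbauerAtOne_zero hl] using gegenbauerAtOne_succ hl 0
    simp only [gegenbauerCt, Nat.reduceDiv, zero_add, Finset.range_one, Nat.cast_one,
      Finset.sum_singleton, pow_zero, Nat.cast_zero, sub_zero, Gamma_add_one hl.ne', one_mul,
      Nat.factorial_zero, mul_zero, tsub_zero, Nat.factorial_one, mul_one, div_one, pow_one,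
      Complex.ofReal_mul, Complex.ofReal_ofNat, hone, laplaceIntegral_one hl]
    ring
  | more n ih0 ih1 =>
    have hrec : ((n : ℂ) + 2) * gegenbauerCt (n + 2) l x
        = 2 * (n + 1 + l) * x * gegenbauerCt (n + 1) l x - (n + 2 * l) * gegenbauerCt n l x := by
      exact_mod_cast gegenbauerCt_recurrence hl x n
    have h1 : ((n : ℂ) + 1) * gegenbauerAtOne (n + 1) l = (n + 2 * l) * gegenbauerAtOne n l := by
      exact_mod_cast gegenbauerAtOne_succ hl n
    have h2 : ((n : ℂ) + 2) * gegenbauerAtOne (n + 2) l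
        = (n + 1 + 2 * l) * gegenbauerAtOne (n + 1) l := by
      have := gegenbauerAtOne_succ hl (n + 1)
      push_cast at this
      exact_mod_cast (by linear_combination this : (n + 2 : ℝ) * gegenbauerAtOne (n + 2) l
        = (n + 1 + 2 * l) * gegenbauerAtOne (n + 1) l)
    have hn : (n : ℂ) + 2 ≠ 0 := by exact_mod_cast (Nat.succ_ne_zero (n + 1))
    refine mul_left_cancel₀ hn ?_
    rw [hrec, ih0, ih1]
    linear_combination (-laplaceIntegral l x s (n + 2)) * h2
      - gegenbauerAtOne (n + 1) l * laplaceIntegral_recurrence hl hxs n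
      + laplaceIntegral l x s n * h1

end GegenbauerPolynomial

section GeneratingFunction

variable {l : ℝ}

lemma choose_eq_Gamma_div {a : ℝ} (ha : 0 < a) (n : ℕ) :
    Ring.choose ((a : ℂ) + n - 1) n
      = ((Real.Gamma (n + a) / (n.factorial * Real.Gamma a) : ℝ) : ℂ) := by
  have hn : ∀ k : ℕ, (a : ℂ) ≠ -k := fun k h => by
    have : a = -k := by exact_mod_cast h
    linarith [(k.cast_nonneg : (0 : ℝ) ≤ k)]
  have hmul := Ring.factorial_nsmul_multichoose_eq_ascPochhammer (a : ℂ) n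
  rw [Polynomial.ascPochhammer_smeval_eq_eval, ← Complex.Gamma_add_nat_div_Gamma_eq a hn,
    nsmul_eq_mul, add_comm (a : ℂ)] at hmul
  rw [← Ring.multichoose_eq, Complex.ofReal_div, Complex.ofReal_mul, ← Complex.Gamma_ofReal,
    ← Complex.Gamma_ofReal, Complex.ofReal_natCast, Complex.ofReal_add, Complex.ofReal_natCast,
    mul_comm, ← div_div, ← hmul, mul_div_cancel_left₀ _ (by exact_mod_cast n.factorial_ne_zero)]

lemma hasSum_one_sub_cpow_neg {a : ℝ} (ha : 0 < a) {z : ℂ} (hz : ‖z‖ < 1) :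
    HasSum (fun n : ℕ => ((Real.Gamma (n + a) / (n.factorial * Real.Gamma a) : ℝ) : ℂ) * z ^ n)
      ((1 - z) ^ (-(a : ℂ))) := by
  have h := (Complex.one_div_one_sub_cpow_hasFPowerSeriesOnBall_zero a).hasSum_sub (y := z)
    (by simpa [← ofReal_norm] using hz)
  simpa [choose_eq_Gamma_div ha, Complex.cpow_neg, mul_comm] using h

lemma gegenbauerAtOne_nonneg (hl : 0 < l) (n : ℕ) : 0 ≤ gegenbauerAtOne n l := by
  have := Gamma_pos_of_pos hl
  have := Gamma_pos_of_pos (by positivity : 0 < 2 * l)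
  have := Gamma_pos_of_pos (by positivity : 0 < n + 2 * l)
  unfold gegenbauerAtOne
  positivity

lemma hasSum_gegenbauerAtOne (hl : 0 < l) {z : ℂ} (hz : ‖z‖ < 1) :
    HasSum (fun n : ℕ => (gegenbauerAtOne n l : ℂ) * z ^ n)
      (Real.Gamma l * (1 - z) ^ (-(2 * l : ℂ))) := by
  have h := (hasSum_one_sub_cpow_neg (by positivity : 0 < 2 * l) hz).mul_left (Real.Gamma l : ℂ)
  rw [Complex.ofReal_mul, Complex.ofReal_ofNat] at h
  refine h.congr_fun fun n => ?_
  rw [gegenbauerAtOne]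
  push_cast
  ring

lemma summable_gegenbauerAtOne_mul_pow (hl : 0 < l) {r : ℝ} (hr0 : 0 ≤ r) (hr : r < 1) :
    Summable fun n : ℕ => gegenbauerAtOne n l * r ^ n := by
  have h := (hasSum_gegenbauerAtOne hl (z := r) (by simpa [abs_of_nonneg hr0])).summable.norm
  refine h.congr fun n => ?_
  simp [abs_of_nonneg hr0, abs_of_nonneg (gegenbauerAtOne_nonneg hl n)]

lemma hasSum_integral_gegenbauerMeasure {E : Type*} [NormedAddCommGroup E] [NormedSpace ℝ E]
    (hl : 0 < l) {F : ℕ → ℝ → E} {f : ℝ → E} {u : ℕ → ℝ}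
    (hF : ∀ n, ContinuousOn (F n) (Icc (-1) 1)) (hu : Summable u)
    (hFu : ∀ n, ∀ v ∈ Icc (-1 : ℝ) 1, ‖F n v‖ ≤ u n)
    (hf : ∀ v ∈ Icc (-1 : ℝ) 1, HasSum (F · v) (f v)) :
    HasSum (fun n => ∫ v, F n v ∂(gegenbauerMeasure l)) (∫ v, f v ∂(gegenbauerMeasure l)) := by
  have := isProbabilityMeasure_gegenbauerMeasure hl
  have hae := ae_gegenbauerMeasure_mem_Icc l
  refine hasSum_integral_of_dominated_convergence (fun n _ => u n)
    (fun n => aestronglyMeasurable_gegenbauerMeasure (hF n)) (fun n => ?_)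
    (.of_forall fun _ => hu) (integrable_const _) ?_
  · filter_upwards [hae] with v hv using hFu n v hv
  · filter_upwards [hae] with v hv using hf v hv

lemma norm_add_I_mul_mul_le_one {x s : ℝ} (hxs : x ^ 2 + s ^ 2 = 1) {v : ℝ}
    (hv : v ∈ Icc (-1 : ℝ) 1) : ‖(x : ℂ) + Complex.I * s * v‖ ≤ 1 := by
  have hv2 : v ^ 2 ≤ 1 := (sq_le_one_iff_abs_le_one v).2 (abs_le.2 hv)
  rw [← sq_le_one_iff₀ (norm_nonneg _), Complex.sq_norm, Complex.normSq_apply]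
  simp only [Complex.add_re, Complex.ofReal_re, Complex.mul_re, Complex.I_re, zero_mul,
    Complex.I_im, Complex.ofReal_im, mul_zero, sub_self, Complex.mul_im, one_mul, zero_add,
    add_zero, Complex.add_im]
  nlinarith [mul_le_mul_of_nonneg_left hv2 (sq_nonneg s)]

lemma abs_gegenbauerCt_le (hl : 0 < l) {x s : ℝ} (hxs : x ^ 2 + s ^ 2 = 1) (n : ℕ) :
    |gegenbauerCt n l x| ≤ gegenbauerAtOne n l := by
  have := isProbabilityMeasure_gegenbauerMeasure hl
  have hle : ‖laplaceIntegral l x s n‖ ≤ 1 := by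
    refine (norm_integral_le_of_norm_le_const (C := 1) ?_).trans (by simp)
    filter_upwards [ae_gegenbauerMeasure_mem_Icc l] with v hv
    rw [norm_pow]
    exact pow_le_one₀ (norm_nonneg _) (norm_add_I_mul_mul_le_one hxs hv)
  calc |gegenbauerCt n l x| = ‖(gegenbauerCt n l x : ℂ)‖ := by simp
    _ = gegenbauerAtOne n l * ‖laplaceIntegral l x s n‖ := by
      rw [gegenbauerCt_eq_laplaceIntegral hl hxs, norm_mul,
        Complex.norm_of_nonneg (gegenbauerAtOne_nonneg hl n)]
    _ ≤ gegenbauerAtOne n l := mul_le_of_le_one_right (gegenbauerAtOne_nonneg hl n) hle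

lemma norm_mul_add_I_mul_mul_lt_one {x s : ℝ} (hxs : x ^ 2 + s ^ 2 = 1) {v : ℝ}
    (hv : v ∈ Icc (-1 : ℝ) 1) {z : ℂ} (hz : ‖z‖ < 1) :
    ‖z * ((x : ℂ) + Complex.I * s * v)‖ < 1 := by
  rw [norm_mul]
  exact (mul_le_of_le_one_right (norm_nonneg _) (norm_add_I_mul_mul_le_one hxs hv)).trans_lt hz

lemma abs_im_mul_lt_re_one_sub_mul {y s : ℝ} (hys : y ^ 2 + s ^ 2 = 1) {z : ℂ} (hz : ‖z‖ < 1) :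
    |(-z * s).im| < (1 - z * y).re := by
  have hz2 : z.re ^ 2 + z.im ^ 2 < 1 := by
    have : ‖z‖ ^ 2 < 1 := (sq_lt_one_iff₀ (norm_nonneg _)).2 hz
    rw [Complex.sq_norm, Complex.normSq_apply] at this
    linarith
  simp only [neg_mul, Complex.neg_im, Complex.mul_im, Complex.ofReal_im, mul_zero,
    Complex.ofReal_re, zero_add, Complex.sub_re, Complex.one_re, Complex.mul_re, sub_zero]
  rw [abs_lt]
  constructor <;>
    nlinarith [sq_nonneg (y - z.re), sq_nonneg (s - z.im), sq_nonneg (s + z.im)]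

theorem hasSum_gegenbauerCt_mul_pow (hl : 0 < l) {y s : ℝ} (hys : y ^ 2 + s ^ 2 = 1) {z : ℂ}
    (hz : ‖z‖ < 1) :
    HasSum (fun n : ℕ => (gegenbauerCt n l y : ℂ) * z ^ n)
      (Real.Gamma l * (1 - 2 * y * z + z ^ 2) ^ (-(l : ℂ))) := by
  have hsum := hasSum_integral_gegenbauerMeasure hl
    (F := fun n v => (gegenbauerAtOne n l : ℂ) * (z * ((y : ℂ) + Complex.I * s * v)) ^ n)
    (fun n => by fun_prop) (summable_gegenbauerAtOne_mul_pow hl (norm_nonneg z) hz)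
    (fun n v hv => ?_)
    (fun v hv => hasSum_gegenbauerAtOne hl (norm_mul_add_I_mul_mul_lt_one hys hv hz))
  · have hint := integral_linear_cpow hl (abs_im_mul_lt_re_one_sub_mul hys hz)
    have hys' : (y : ℂ) ^ 2 + (s : ℂ) ^ 2 = 1 := by exact_mod_cast hys
    rw [show (1 - z * y) ^ 2 + (-z * s) ^ 2 = 1 - 2 * y * z + z ^ 2 by
      linear_combination z ^ 2 * hys'] at hint
    have hlin (v : ℝ) : 1 - z * (y + Complex.I * s * v)
        = 1 - z * y + Complex.I * (-z * s) * v := by ring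
    simp only [hlin, mul_pow] at hsum
    rw [← hint, ← integral_const_mul]
    refine hsum.congr_fun fun n => ?_
    rw [gegenbauerCt_eq_laplaceIntegral hl hys, laplaceIntegral, integral_const_mul,
      integral_const_mul]
    ring
  · rw [norm_mul, norm_pow, norm_mul, Complex.norm_of_nonneg (gegenbauerAtOne_nonneg hl n)]
    gcongr
    · exact gegenbauerAtOne_nonneg hl n
    · exact mul_le_of_le_one_right (norm_nonneg _) (norm_add_I_mul_mul_le_one hys hv)

theorem hasSum_gegenbauerCt_mul_gegenbauerCt (hl : 0 < l) {x sx y sy : ℝ}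
    (hx : x ^ 2 + sx ^ 2 = 1) (hy : y ^ 2 + sy ^ 2 = 1) {t : ℝ} (ht : |t| < 1) :
    HasSum (fun n : ℕ => ((n.factorial / Real.Gamma (n + 2 * l) * gegenbauerCt n l x
        * gegenbauerCt n l y * t ^ n : ℝ) : ℂ))
      (Real.Gamma l ^ 2 / Real.Gamma (2 * l) * ∫ v : ℝ, (1 - 2 * y * (t * (x + Complex.I * sx * v))
        + (t * (x + Complex.I * sx * v)) ^ 2) ^ (-(l : ℂ)) ∂(gegenbauerMeasure l)) := by
  have hsum := hasSum_integral_gegenbauerMeasure hl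
    (F := fun n v => (gegenbauerCt n l y : ℂ) * (t * ((x : ℂ) + Complex.I * sx * v)) ^ n)
    (fun n => by fun_prop) (summable_gegenbauerAtOne_mul_pow hl (abs_nonneg t) ht)
    (fun n v hv => ?_)
    (fun v hv => hasSum_gegenbauerCt_mul_pow hl hy (norm_mul_add_I_mul_mul_lt_one hx hv (by simpa)))
  · rw [sq, mul_div_right_comm, mul_assoc, ← integral_const_mul]
    refine (hsum.mul_left (Real.Gamma l / Real.Gamma (2 * l) : ℂ)).congr_fun fun n => ?_
    have hΓ : (Real.Gamma (n + 2 * l) : ℂ) ≠ 0 :=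
      Complex.ofReal_ne_zero.2 (Gamma_pos_of_pos (by positivity)).ne'
    have hfac : (n.factorial : ℂ) ≠ 0 := by exact_mod_cast n.factorial_ne_zero
    simp only [mul_pow]
    push_cast
    rw [integral_const_mul, integral_const_mul, gegenbauerCt_eq_laplaceIntegral hl hx,
      laplaceIntegral, gegenbauerAtOne]
    push_cast
    field_simp
  · rw [norm_mul, norm_pow, norm_mul, Complex.norm_real, Complex.norm_real]
    gcongr
    · exact gegenbauerAtOne_nonneg hl n
    · exact abs_gegenbauerCt_le hl hy n
    · exact mul_le_of_le_one_right (norm_nonneg _) (norm_add_I_mul_mul_le_one hx hv)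

end GeneratingFunction

section PowerSeries

variable {𝕜 : Type*} [RCLike 𝕜] {E : Type*} [NormedAddCommGroup E] [NormedSpace 𝕜 E]

lemma natCast_mul_pow_sub_one_mul_le {r R : ℝ} (hr : 0 ≤ r) (hrR : r ≤ R) (n : ℕ) :
    n * r ^ (n - 1) * (R - r) ≤ R ^ n := by
  rcases n with _ | n
  · simp
  suffices h : r ^ (n + 1) + (n + 1) * r ^ n * (R - r) ≤ R ^ (n + 1) by
    have := pow_nonneg hr (n + 1)
    push_cast [Nat.add_sub_cancel]
    linarith
  induction n with
  | zero => simp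
  | succ n ih =>
    calc r ^ (n + 1 + 1) + ((n + 1 : ℕ) + 1) * r ^ (n + 1) * (R - r)
        ≤ r ^ (n + 1 + 1) + ((n + 1 : ℕ) + 1) * r ^ (n + 1) * (R - r)
          + (n + 1) * r ^ n * (R - r) ^ 2 := le_add_of_nonneg_right (by positivity)
      _ = (r ^ (n + 1) + (n + 1) * r ^ n * (R - r)) * R := by push_cast; ring
      _ ≤ R ^ (n + 1) * R := by gcongr; exact hr.trans hrR
      _ = R ^ (n + 1 + 1) := (pow_succ R (n + 1)).symm

lemma hasDerivAt_tsum_pow_smul [CompleteSpace E] {a : ℕ → E} {R : ℝ}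
    (ha : Summable fun n => R ^ n * ‖a n‖) {z : 𝕜} (hz : ‖z‖ < R) :
    HasDerivAt (fun z : 𝕜 => ∑' n, z ^ n • a n)
      (∑' n : ℕ, z ^ n • ((n + 1 : 𝕜) • a (n + 1))) z := by
  obtain ⟨r, hzr, hrR⟩ := exists_between hz
  have hr : 0 < r := (norm_nonneg z).trans_lt hzr
  have hRr : 0 < R - r := sub_pos.2 hrR
  have hderiv (n : ℕ) (w : 𝕜) : HasDerivAt (fun z : 𝕜 => z ^ n • a n)
      ((n * w ^ (n - 1)) • a n) w := (hasDerivAt_pow n w).smul_const (a n)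
  have hbound (n : ℕ) (w : 𝕜) (hw : w ∈ ball (0 : 𝕜) r) :
      ‖((n : 𝕜) * w ^ (n - 1)) • a n‖ ≤ R ^ n * ‖a n‖ / (R - r) := by
    rw [mem_ball_zero_iff] at hw
    rw [norm_smul, norm_mul, norm_pow, RCLike.norm_natCast, le_div_iff₀ hRr, mul_right_comm]
    gcongr
    calc (n : ℝ) * ‖w‖ ^ (n - 1) * (R - r) ≤ n * r ^ (n - 1) * (R - r) := by gcongr
      _ ≤ R ^ n := natCast_mul_pow_sub_one_mul_le hr.le hrR.le n
  have hsum := ha.div_const (R - r)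
  have h0 : z ∈ ball (0 : 𝕜) r := mem_ball_zero_iff.2 hzr
  have h := hasDerivAt_tsum_of_isPreconnected hsum isOpen_ball
    (convex_ball (0 : 𝕜) r).isPreconnected (fun n w _ => hderiv n w) hbound
    (mem_ball_self hr) ?_ h0
  · refine h.congr_deriv ?_
    rw [(Summable.of_norm_bounded hsum (hbound · z h0)).tsum_eq_zero_add]
    simp [smul_smul, mul_comm]
  · exact summable_of_ne_finset_zero (s := {0}) fun n hn => by simp_all

end PowerSeries

/-- The `m`-th Taylor coefficient of `besselClifford β`. -/
noncomputable def besselCliffordCoeff (β : ℝ) (m : ℕ) : ℝ :=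
  (m.factorial * Real.Gamma (m + β + 1))⁻¹

/-- The (regularized) Bessel–Clifford function `∑ m, z ^ m / (m! Γ(m + β + 1))`, in terms of which
the normalized Bessel functions of both kinds are `z ↦ besselClifford β (∓z ^ 2 / 4)`. -/
noncomputable def besselClifford {𝕜 : Type*} [RCLike 𝕜] (β : ℝ) (z : 𝕜) : 𝕜 :=
  ∑' m : ℕ, z ^ m • (besselCliffordCoeff β m : 𝕜)

section BesselClifford

variable {𝕜 : Type*} [RCLike 𝕜] (β : ℝ)

lemma add_one_mul_besselCliffordCoeff (m : ℕ) :
    (m + 1) * besselCliffordCoeff β (m + 1) = besselCliffordCoeff (β + 1) m := by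
  rw [besselCliffordCoeff, besselCliffordCoeff, Nat.factorial_succ]
  push_cast
  rw [show (m : ℝ) + 1 + β + 1 = m + (β + 1) + 1 by ring, mul_assoc, mul_inv,
    mul_inv_cancel_left₀ (by positivity)]

lemma besselCliffordCoeff_sub_one (m : ℕ) :
    besselCliffordCoeff (β - 1) m = (m + β) * besselCliffordCoeff β m := by
  have hΓ : Real.Gamma (m + (β - 1) + 1) = Real.Gamma (m + β) := by ring_nf
  rw [besselCliffordCoeff, besselCliffordCoeff, hΓ]
  rcases eq_or_ne ((m : ℝ) + β) 0 with h | h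
  · simp [h]
  · rw [Gamma_add_one h]
    field_simp

lemma summable_pow_mul_abs_besselCliffordCoeff (r : ℝ) :
    Summable fun m => r ^ m * |besselCliffordCoeff β m| := by
  refine summable_of_ratio_norm_eventually_le (r := 1 / 2) (by norm_num) ?_
  have hlim : Tendsto (fun m : ℕ => ((m : ℝ) + 1) * (m + (β + 1))) atTop atTop :=
    (tendsto_atTop_add_const_right _ _ tendsto_natCast_atTop_atTop).atTop_mul_atTop₀
      (tendsto_atTop_add_const_right _ _ tendsto_natCast_atTop_atTop)
  filter_upwards [hlim.eventually_ge_atTop (2 * |r|), hlim.eventually_gt_atTop 0] with m hm hm0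
  have hc : besselCliffordCoeff β m = (m + 1) * (m + (β + 1)) * besselCliffordCoeff β (m + 1) := by
    have h := besselCliffordCoeff_sub_one (β + 1) m
    rw [add_sub_cancel_right, ← add_one_mul_besselCliffordCoeff] at h
    linear_combination h
  rw [hc]
  simp only [norm_mul, norm_pow, Real.norm_eq_abs, abs_abs, abs_mul, abs_of_pos hm0]
  rw [← abs_mul, abs_of_pos hm0, pow_succ]
  nlinarith [mul_le_mul_of_nonneg_right hm
    (by positivity : 0 ≤ |r| ^ m * |besselCliffordCoeff β (m + 1)|)]

lemma hasSum_besselClifford (z : 𝕜) :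
    HasSum (fun m => z ^ m • (besselCliffordCoeff β m : 𝕜)) (besselClifford β z) := by
  refine (Summable.of_norm ?_).hasSum
  simpa [norm_smul] using summable_pow_mul_abs_besselCliffordCoeff β ‖z‖

lemma hasDerivAt_besselClifford (z : 𝕜) :
    HasDerivAt (besselClifford β) (besselClifford (β + 1) z) z := by
  refine (hasDerivAt_tsum_pow_smul (R := ‖z‖ + 1)
    (by simpa using summable_pow_mul_abs_besselCliffordCoeff β (‖z‖ + 1))
    (lt_add_one _)).congr_deriv (tsum_congr fun m => ?_)
  rw [← add_one_mul_besselCliffordCoeff]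
  simp

lemma continuous_besselClifford : Continuous (besselClifford β : 𝕜 → 𝕜) :=
  continuous_iff_continuousAt.2 fun z => (hasDerivAt_besselClifford β z).continuousAt

theorem besselClifford_sub_one (z : 𝕜) :
    besselClifford (β - 1) z = β * besselClifford β z + z * besselClifford (β + 1) z := by
  refine (hasSum_besselClifford (β - 1) z).unique ?_
  have hsucc : HasSum (fun m : ℕ => z ^ (m + 1) • ((m + 1) * besselCliffordCoeff β (m + 1) : 𝕜))
      (z * besselClifford (β + 1) z) := by
    refine ((hasSum_besselClifford (β + 1) z).mul_left z).congr_fun fun m => ?_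
    rw [← add_one_mul_besselCliffordCoeff, smul_eq_mul, smul_eq_mul]
    push_cast
    ring
  have hshift := (hasSum_nat_add_iff' (f := fun m : ℕ => z ^ m • (m * besselCliffordCoeff β m : 𝕜))
    1).1 (by simpa using hsucc)
  refine (((hasSum_besselClifford β z).mul_left (β : 𝕜)).add hshift).congr_fun fun m => ?_
  rw [besselCliffordCoeff_sub_one]
  simp only [smul_eq_mul]
  push_cast
  ring

lemma besselClifford_zero : besselClifford β (0 : 𝕜) = ((Real.Gamma (β + 1))⁻¹ : ℝ) := by
  rw [besselClifford, tsum_eq_single 0 fun m hm => by simp [hm]]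
  simp [besselCliffordCoeff]

lemma ofReal_besselClifford (x : ℝ) :
    ((besselClifford β x : ℝ) : ℂ) = besselClifford β (x : ℂ) := by
  simp [besselClifford, Complex.ofReal_tsum]

lemma besselJt_eq_besselClifford (α x : ℝ) : besselJt α x = besselClifford α (-(x ^ 2 / 4)) :=
  tsum_congr fun m => by
    rw [show -(x ^ 2 / 4) = -1 * (x / 2) ^ 2 by ring, mul_pow, ← pow_mul, besselCliffordCoeff,
      smul_eq_mul, RCLike.ofReal_real_eq_id, id]
    ring

lemma besselIt_eq_besselClifford (α x : ℝ) : besselIt α x = besselClifford α (x ^ 2 / 4) :=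
  tsum_congr fun m => by
    rw [show x ^ 2 / 4 = (x / 2) ^ 2 by ring, ← pow_mul, besselCliffordCoeff, smul_eq_mul,
      RCLike.ofReal_real_eq_id, id]
    ring

lemma besselI_eq_rpow_mul_besselClifford (β : ℝ) {x : ℝ} (hx : 0 < x) :
    besselI β x = (x / 2) ^ β * besselClifford β (x ^ 2 / 4) := by
  rw [besselI, besselClifford, ← tsum_mul_left]
  refine tsum_congr fun m => ?_
  have hpow : (x / 2) ^ (2 * (m : ℝ) + β) = (x / 2) ^ β * (x ^ 2 / 4) ^ m := by
    rw [add_comm, rpow_add (by positivity), ← Nat.cast_ofNat (R := ℝ) (n := 2), ← Nat.cast_mul,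
      rpow_natCast, pow_mul, div_pow]
    norm_num
  rw [hpow, besselCliffordCoeff]
  simp only [mul_inv_rev, ringHom_apply, smul_eq_mul]
  ring

end BesselClifford

lemma frequently_nhdsNE_of_forall_ofReal {p : ℂ → Prop} {x : ℝ} (h : ∀ y : ℝ, x < y → p y) :
    ∃ᶠ z in nhdsWithin (x : ℂ) {(x : ℂ)}ᶜ, p z := by
  have hlim : Tendsto (fun y : ℝ => (y : ℂ)) (nhdsWithin x (Ioi x))
      (nhdsWithin (x : ℂ) {(x : ℂ)}ᶜ) := by
    refine tendsto_nhdsWithin_iff.2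
      ⟨(Complex.continuous_ofReal.tendsto x).mono_left nhdsWithin_le_nhds, ?_⟩
    filter_upwards [self_mem_nhdsWithin] with y (hy : x < y)
    simpa using hy.ne'
  refine hlim.frequently (Eventually.frequently ?_)
  filter_upwards [self_mem_nhdsWithin] with y hy using h y hy

section BesselEquation

lemma eq_zero_of_bessel_ode_of_nonneg {E : Type*} [NormedAddCommGroup E] [InnerProductSpace ℝ E]
    {c : ℝ} (hc : 0 < c) {f f' f'' : ℝ → E} (hf : ∀ x, HasDerivAt f (f' x) x)
    (hf' : ∀ x, HasDerivAt f' (f'' x) x) (hode : ∀ x, x • f'' x + c • f' x + x • f x = 0)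
    (h0 : f 0 = 0) {x : ℝ} (hx : 0 ≤ x) : f x = 0 := by
  have h0' : f' 0 = 0 := by simpa [hc.ne'] using hode 0
  have henergy (x : ℝ) : HasDerivAt (fun x => ‖f x‖ ^ 2 + ‖f' x‖ ^ 2)
      (2 * inner ℝ (f x) (f' x) + 2 * inner ℝ (f' x) (f'' x)) x :=
    (hf x).norm_sq.add (hf' x).norm_sq
  have hanti : AntitoneOn (fun x => ‖f x‖ ^ 2 + ‖f' x‖ ^ 2) (Ici 0) := by
    refine antitoneOn_of_deriv_nonpos (convex_Ici 0)
      (fun x _ => (henergy x).continuousAt.continuousWithinAt)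
      (fun x _ => (henergy x).differentiableAt.differentiableWithinAt) fun x hx => ?_
    rw [interior_Ici, mem_Ioi] at hx
    have hinner := congrArg (inner ℝ (f' x)) (hode x)
    simp only [inner_add_right, inner_smul_right, inner_zero_right, real_inner_self_eq_norm_sq]
      at hinner
    rw [(henergy x).deriv, real_inner_comm]
    refine nonpos_of_mul_nonpos_right ?_ hx
    nlinarith [sq_nonneg ‖f' x‖]
  have hle := hanti self_mem_Ici hx hx
  simp only [h0, h0', norm_zero] at hle
  have : ‖f x‖ ^ 2 = 0 := by nlinarith [sq_nonneg ‖f x‖, sq_nonneg ‖f' x‖]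
  simpa using this

lemma eq_zero_of_bessel_ode {c : ℝ} (hc : 0 < c) {f f' f'' : ℂ → ℂ}
    (hf : ∀ z, HasDerivAt f (f' z) z) (hf' : ∀ z, HasDerivAt f' (f'' z) z)
    (hode : ∀ z, z * f'' z + c * f' z + z * f z = 0) (h0 : f 0 = 0) (z : ℂ) : f z = 0 := by
  have hreal {x : ℝ} (hx : 0 ≤ x) : f x = 0 :=
    eq_zero_of_bessel_ode_of_nonneg (f := fun x => f x) hc (fun x => (hf x).comp_ofReal)
      (fun x => (hf' x).comp_ofReal) (fun x => by simpa using hode x) (by simpa using h0) hx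
  have hanalytic : AnalyticOnNhd ℂ f univ :=
    Complex.analyticOnNhd_univ_iff_differentiable.2 fun z => (hf z).differentiableAt
  have hfreq := frequently_nhdsNE_of_forall_ofReal (p := fun z => f z = 0)
    fun x hx => hreal (le_of_lt hx)
  exact congrFun (hanalytic.eq_of_frequently_eq (g := fun _ => 0) analyticOnNhd_const hfreq) z

end BesselEquation

/-- The normalized (spherical) Bessel function `Γ(l + 1/2) J̃_{l - 1/2}(z)` as an entire function of
`u = z ^ 2`: for `2 * l + 1 ∈ ℕ`, the mean of a plane wave over the sphere in dimension
`2 * l + 1`. -/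
noncomputable def sphericalBessel (l : ℝ) (u : ℂ) : ℂ :=
  Real.Gamma (l + 1 / 2) * besselClifford (l - 1 / 2) (-(u / 4))

section SphericalBessel

variable {l : ℝ}

lemma hasDerivAt_sphericalBessel (hl : 0 < l) (u : ℂ) :
    HasDerivAt (sphericalBessel l) (-sphericalBessel (l + 1) u / (4 * l + 2)) u := by
  have hΓ : Real.Gamma (l + 1 + 1 / 2) = (l + 1 / 2) * Real.Gamma (l + 1 / 2) := by
    rw [add_right_comm, Gamma_add_one (by positivity)]
  have hl' : (4 * l + 2 : ℂ) ≠ 0 := by exact_mod_cast (by positivity : 4 * l + 2 ≠ 0)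
  have harg : HasDerivAt (fun u : ℂ => -(u / 4)) (-(1 / 4)) u :=
    ((hasDerivAt_id' u).div_const 4).neg
  refine (((hasDerivAt_besselClifford (l - 1 / 2) _).comp u harg).const_mul _).congr_deriv ?_
  rw [sphericalBessel, hΓ, show l - 1 / 2 + 1 = l + 1 - 1 / 2 by ring]
  push_cast
  field_simp
  ring

lemma hasDerivAt_deriv_sphericalBessel (hl : 0 < l) (u : ℂ) :
    HasDerivAt (fun u => -sphericalBessel (l + 1) u / (4 * l + 2))
      (sphericalBessel (l + 2) u / ((4 * l + 2) * (4 * l + 6))) u := by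
  refine ((hasDerivAt_sphericalBessel (add_pos hl one_pos) u).neg.div_const _).congr_deriv ?_
  rw [show l + 1 + 1 = l + 2 by ring]
  push_cast
  rw [show 4 * ((l : ℂ) + 1) + 2 = 4 * l + 6 by ring, neg_div, neg_div, neg_div, neg_neg, div_div,
    mul_comm (4 * (l : ℂ) + 6)]

lemma continuous_sphericalBessel : Continuous (sphericalBessel l) :=
  continuous_const.mul ((continuous_besselClifford _).comp (by fun_prop))

lemma sphericalBessel_zero (hl : 0 < l) : sphericalBessel l 0 = 1 := by
  have hΓ : (Real.Gamma (l + 1 / 2) : ℂ) ≠ 0 :=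
    Complex.ofReal_ne_zero.2 (Gamma_pos_of_pos (by positivity)).ne'
  have h := besselClifford_zero (𝕜 := ℂ) (l - 1 / 2)
  rw [show l - 1 / 2 + 1 = l + 1 / 2 by ring, RCLike.ofReal_eq_complex_ofReal] at h
  rw [sphericalBessel, zero_div, neg_zero, h, Complex.ofReal_inv, mul_inv_cancel₀ hΓ]

lemma sphericalBessel_ode (hl : 0 < l) (u : ℂ) :
    4 * u * (sphericalBessel (l + 2) u / ((4 * l + 2) * (4 * l + 6)))
      + (4 * l + 2) * (-sphericalBessel (l + 1) u / (4 * l + 2)) + sphericalBessel l u = 0 := by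
  have hΓ : Real.Gamma (l + 1 + 1 / 2) = (l + 1 / 2) * Real.Gamma (l + 1 / 2) := by
    rw [add_right_comm, Gamma_add_one (by positivity)]
  have hΓ' : Real.Gamma (l + 2 + 1 / 2) = (l + 3 / 2) * Real.Gamma (l + 1 + 1 / 2) := by
    rw [show l + 2 + 1 / 2 = l + 1 + 1 / 2 + 1 by ring, Gamma_add_one (by positivity)]
    ring
  have h2 : (4 * l + 2 : ℂ) ≠ 0 := by exact_mod_cast (by positivity : 4 * l + 2 ≠ 0)
  have h6 : (4 * l + 6 : ℂ) ≠ 0 := by exact_mod_cast (by positivity : 4 * l + 6 ≠ 0)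
  have hrec := besselClifford_sub_one (l + 1 / 2) (-(u / 4))
  rw [show l + 1 / 2 - 1 = l - 1 / 2 by ring, RCLike.ofReal_eq_complex_ofReal] at hrec
  rw [sphericalBessel, sphericalBessel, sphericalBessel, hΓ', hΓ, hrec,
    show l + 2 - 1 / 2 = l + 1 / 2 + 1 by ring, show l + 1 - 1 / 2 = l + 1 / 2 by ring]
  push_cast
  field_simp
  ring

lemma eq_mul_sphericalBessel_of_ode (hl : 0 < l) {f f' f'' : ℂ → ℂ}
    (hf : ∀ z, HasDerivAt f (f' z) z) (hf' : ∀ z, HasDerivAt f' (f'' z) z)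
    (hode : ∀ z, z * f'' z + 2 * l * f' z + z * f z = 0) (z : ℂ) :
    f z = f 0 * sphericalBessel l (z ^ 2) := by
  have hsq (z : ℂ) : HasDerivAt (fun z : ℂ => z ^ 2) (2 * z) z := by simpa using hasDerivAt_pow 2 z
  have hS (z : ℂ) := (hasDerivAt_sphericalBessel hl (z ^ 2)).comp z (hsq z)
  have hS' (z : ℂ) := ((hasDerivAt_deriv_sphericalBessel hl (z ^ 2)).comp z (hsq z)).mul
    ((hasDerivAt_id' z).const_mul 2)
  have h := eq_zero_of_bessel_ode (c := 2 * l) (by positivity)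
    (fun z => (hf z).sub ((hS z).const_mul (f 0))) (fun z => (hf' z).sub ((hS' z).const_mul (f 0)))
    (fun z => ?_) (by simp [sphericalBessel_zero hl]) z
  · exact sub_eq_zero.1 h
  · simp only [Pi.sub_apply, Function.comp_apply]
    push_cast
    linear_combination hode z - f 0 * z * sphericalBessel_ode hl (z ^ 2)

end SphericalBessel

section IntegralRepresentations

variable {l : ℝ}

theorem integral_exp_gegenbauerMeasure (hl : 0 < l) (z : ℂ) :
    ∫ v : ℝ, Complex.exp (Complex.I * z * v) ∂(gegenbauerMeasure l)
      = sphericalBessel l (z ^ 2) := by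
  have := isProbabilityMeasure_gegenbauerMeasure hl
  have hexp (v : ℝ) (z : ℂ) : HasDerivAt (fun z => Complex.exp (Complex.I * z * v))
      (Complex.I * v * Complex.exp (Complex.I * z * v)) z := by
    refine ((((hasDerivAt_id' z).const_mul Complex.I).mul_const (v : ℂ)).cexp).congr_deriv ?_
    ring
  have hf (z : ℂ) := hasDerivAt_integral_gegenbauerMeasure hl (F := fun z (v : ℝ) =>
    Complex.exp (Complex.I * z * v)) isOpen_univ (mem_univ z) (fun z _ v _ => hexp v z)
    (fun z _ => by fun_prop) (by fun_prop)
  have hf' (z : ℂ) := hasDerivAt_integral_gegenbauerMeasure hl (F := fun z (v : ℝ) =>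
    Complex.I * v * Complex.exp (Complex.I * z * v)) isOpen_univ (mem_univ z)
    (fun z _ v _ => (hexp v z).const_mul (Complex.I * (v : ℂ))) (fun z _ => by fun_prop)
    (by fun_prop)
  rw [eq_mul_sphericalBessel_of_ode hl hf hf' (fun z => ?_) z]
  · simp
  have hparts := integral_gegenbauerMeasure_byParts hl (g := fun v : ℝ =>
    Complex.exp (Complex.I * z * v)) (fun v _ => by
      simpa using ((((hasDerivAt_id' v).ofReal_comp).const_mul (Complex.I * z)).cexp)) (by fun_prop)
  rw [← integral_const_mul, ← integral_const_mul, ← integral_const_mul,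
    ← integral_add (integrable_gegenbauerMeasure hl (by fun_prop))
      (integrable_gegenbauerMeasure hl (by fun_prop)),
    ← integral_add (integrable_gegenbauerMeasure hl (by fun_prop))
      (integrable_gegenbauerMeasure hl (by fun_prop)), ← mul_zero (-Complex.I), ← hparts,
    ← integral_const_mul]
  congr 1
  ext v
  simp only [Complex.real_smul]
  push_cast
  linear_combination (z * Complex.exp (Complex.I * z * v)) * Complex.I_sq

lemma norm_sphericalBessel_sq_le (hl : 0 < l) (z : ℂ) :
    ‖sphericalBessel l (z ^ 2)‖ ≤ Real.exp |z.im| := by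
  have := isProbabilityMeasure_gegenbauerMeasure hl
  rw [← integral_exp_gegenbauerMeasure hl]
  refine (norm_integral_le_of_norm_le_const (C := Real.exp |z.im|) ?_).trans (by simp)
  filter_upwards [ae_gegenbauerMeasure_mem_Icc l] with v hv
  rw [Complex.norm_exp, Real.exp_le_exp]
  calc (Complex.I * z * v).re = -z.im * v := by simp
    _ ≤ |z.im| * |v| := by rw [← abs_neg, ← abs_mul]; exact le_abs_self _
    _ ≤ |z.im| := mul_le_of_le_one_right (abs_nonneg _) (abs_le.2 hv)

theorem integral_sphericalBessel (hl : 0 < l) (a b : ℂ) :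
    ∫ v : ℝ, sphericalBessel l (a ^ 2 + b ^ 2 - 2 * a * b * v) ∂(gegenbauerMeasure l)
      = sphericalBessel l (a ^ 2) * sphericalBessel l (b ^ 2) := by
  have := isProbabilityMeasure_gegenbauerMeasure hl
  have hu (v : ℝ) (a : ℂ) : HasDerivAt (fun a : ℂ => a ^ 2 + b ^ 2 - 2 * a * b * v)
      (2 * (a - b * v)) a := by
    refine ((hasDerivAt_pow 2 a).add_const (b ^ 2)).sub
      ((((hasDerivAt_id' a).const_mul 2).mul_const b).mul_const (v : ℂ)) |>.congr_deriv ?_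
    push_cast
    ring
  have hF (v : ℝ) (a : ℂ) := (hasDerivAt_sphericalBessel hl _).comp a (hu v a)
  have hF' (v : ℝ) (a : ℂ) := ((hasDerivAt_deriv_sphericalBessel hl _).comp a (hu v a)).mul
    (((hasDerivAt_id' a).sub_const (b * v)).const_mul 2)
  have hc := fun (l : ℝ) => continuous_sphericalBessel (l := l)
  have hf (a : ℂ) := hasDerivAt_integral_gegenbauerMeasure hl (F := fun a (v : ℝ) =>
    sphericalBessel l (a ^ 2 + b ^ 2 - 2 * a * b * v)) isOpen_univ (mem_univ a)
    (fun a _ v _ => hF v a) (fun a _ => by fun_prop) (by fun_prop)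
  have hf' (a : ℂ) := hasDerivAt_integral_gegenbauerMeasure hl isOpen_univ (mem_univ a)
    (fun a _ v _ => hF' v a) (fun a _ => by fun_prop) (by fun_prop)
  rw [eq_mul_sphericalBessel_of_ode hl hf hf' (fun a => ?_) a]
  · simp [mul_comm]
  have hparts := integral_gegenbauerMeasure_byParts hl (g := fun v : ℝ =>
    -sphericalBessel (l + 1) (a ^ 2 + b ^ 2 - 2 * a * b * v) / (4 * l + 2)) (fun v _ =>
      ((hasDerivAt_deriv_sphericalBessel hl _).comp (v : ℂ)
        (((hasDerivAt_id' (v : ℂ)).const_mul (2 * a * b)).const_sub (a ^ 2 + b ^ 2))).comp_ofReal)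
    (by fun_prop)
  rw [← integral_const_mul, ← integral_const_mul, ← integral_const_mul,
    ← integral_add (integrable_gegenbauerMeasure hl (by fun_prop))
      (integrable_gegenbauerMeasure hl (by fun_prop)),
    ← integral_add (integrable_gegenbauerMeasure hl (by fun_prop))
      (integrable_gegenbauerMeasure hl (by fun_prop)), ← mul_zero (2 * b), ← hparts,
    ← integral_const_mul]
  congr 1
  ext v
  simp only [Complex.real_smul, Function.comp_apply]
  push_cast
  linear_combination a * sphericalBessel_ode hl (a ^ 2 + b ^ 2 - 2 * a * b * v)

end IntegralRepresentations

/-- The integral `2 z ^ (β / 2) K_β(2 √z)`, which unlike `K_β` needs no case distinction at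
integers `β`. -/
noncomputable def besselKIntegral (β z : ℝ) : ℝ :=
  ∫ s in Ioi (0 : ℝ), Real.exp (-s - z / s) * s ^ (β - 1)

/-- The function `2 z ^ (β / 2) K_β(2 √z)` for non-integer `β`, by its defining expression in terms
of `I_{-β}` and `I_β`. -/
noncomputable def besselKSeries (β z : ℝ) : ℝ :=
  π / Real.sin (π * β) * (besselClifford (-β) z - z ^ β * besselClifford β z)

section BesselKIntegral

lemma exp_neg_le_factorial_div_pow (k : ℕ) {u : ℝ} (hu : 0 < u) :
    Real.exp (-u) ≤ k.factorial / u ^ k := by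
  have h := Real.pow_div_factorial_le_exp u hu.le k
  rw [Real.exp_neg, ← one_div, div_le_div_iff₀ (Real.exp_pos _) (by positivity), one_mul]
  rwa [div_le_iff₀ (by positivity), mul_comm] at h

variable {z : ℝ} (β : ℝ)

lemma exp_neg_sub_div_mul_rpow_le (k : ℕ) (hz : 0 < z) {s : ℝ} (hs : 0 < s) :
    Real.exp (-s - z / s) * s ^ (β - 1)
      ≤ k.factorial / z ^ k * (Real.exp (-s) * s ^ (β + k - 1)) := by
  have hexp := exp_neg_le_factorial_div_pow k (div_pos hz hs)
  calc Real.exp (-s - z / s) * s ^ (β - 1)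
      = Real.exp (-s) * Real.exp (-(z / s)) * s ^ (β - 1) := by rw [sub_eq_add_neg, Real.exp_add]
    _ ≤ Real.exp (-s) * (k.factorial / (z / s) ^ k) * s ^ (β - 1) := by gcongr
    _ = k.factorial / z ^ k * (Real.exp (-s) * s ^ (β + k - 1)) := by
      rw [add_sub_right_comm, rpow_add hs, rpow_natCast, div_pow]
      field_simp

lemma integrableOn_besselKIntegral (hz : 0 < z) :
    IntegrableOn (fun s => Real.exp (-s - z / s) * s ^ (β - 1)) (Ioi 0) := by
  obtain ⟨k, hk⟩ := exists_nat_gt (-β)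
  have hΓ := Real.GammaIntegral_convergent (s := β + k) (by linarith)
  refine Integrable.mono' (hΓ.const_mul (k.factorial / z ^ k)) (by fun_prop) ?_
  filter_upwards [ae_restrict_mem measurableSet_Ioi] with s (hs : 0 < s)
  rw [Real.norm_of_nonneg (by positivity)]
  exact exp_neg_sub_div_mul_rpow_le β k hz hs

lemma hasDerivAt_besselKIntegral (hz : 0 < z) :
    HasDerivAt (besselKIntegral β) (-besselKIntegral (β - 1) z) z := by
  rw [besselKIntegral, ← integral_neg]
  refine (hasDerivAt_integral_of_dominated_loc_of_deriv_le (s := Ioi (z / 2))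
    (F := fun z s => Real.exp (-s - z / s) * s ^ (β - 1))
    (F' := fun z s => -(Real.exp (-s - z / s) * s ^ (β - 1 - 1)))
    (bound := fun s => Real.exp (-s - z / 2 / s) * s ^ (β - 1 - 1)) (Ioi_mem_nhds (half_lt_self hz))
    (.of_forall fun y => by fun_prop) (integrableOn_besselKIntegral β hz) (by fun_prop) ?_
    (integrableOn_besselKIntegral (β - 1) (half_pos hz)) ?_).2
  · filter_upwards [ae_restrict_mem measurableSet_Ioi] with s (hs : 0 < s) y (hy : z / 2 < y)
    rw [norm_neg, Real.norm_of_nonneg (by positivity)]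
    gcongr
  · filter_upwards [ae_restrict_mem measurableSet_Ioi] with s (hs : 0 < s) y _
    refine ((((hasDerivAt_id' y).div_const s).const_sub (-s)).exp.mul_const _).congr_deriv ?_
    rw [rpow_sub_one hs.ne' (β - 1)]
    ring

lemma besselKIntegral_neg (hz : 0 < z) :
    besselKIntegral (-β) z = z ^ (-β) * besselKIntegral β z := by
  have hβ : besselKIntegral β z = ∫ x in Ioi (0 : ℝ), z ^ β *
      (Real.exp (-x - z / x) * x ^ (-β - 1)) := by
    have hscale := integral_comp_mul_left_Ioi' (fun s => Real.exp (-s - z / s) * s ^ (β - 1)) 0 hz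
    rw [mul_zero] at hscale
    rw [besselKIntegral, ← hscale, ← integral_comp_rpow_Ioi _ (p := -1) (by norm_num),
      ← integral_smul]
    refine setIntegral_congr_fun measurableSet_Ioi fun x (hx : 0 < x) => ?_
    have hexp : Real.exp (-(z * x⁻¹) - z / (z * x⁻¹)) = Real.exp (-x - z / x) := by
      congr 1
      field_simp
      ring
    simp only [smul_eq_mul]
    rw [rpow_neg_one, hexp, mul_rpow hz.le (by positivity), inv_rpow hx.le, rpow_sub_one hx.ne',
      rpow_sub_one hz.ne', rpow_sub_one hx.ne', rpow_sub_one hx.ne', rpow_neg_one, rpow_neg hx.le]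
    simp only [abs_neg, abs_one]
    field_simp
  rw [hβ, integral_const_mul, ← mul_assoc, ← rpow_add hz, neg_add_cancel, rpow_zero, one_mul,
    besselKIntegral]

lemma tendsto_besselKIntegral_zero {β : ℝ} (hβ : 0 < β) :
    Tendsto (besselKIntegral β) (nhdsWithin 0 (Ioi 0)) (nhds (Real.Gamma β)) := by
  rw [Real.Gamma_eq_integral hβ]
  refine tendsto_integral_filter_of_dominated_convergence (fun s => Real.exp (-s) * s ^ (β - 1))
    (.of_forall fun z => by fun_prop) ?_ (Real.GammaIntegral_convergent hβ) ?_
  · filter_upwards [self_mem_nhdsWithin] with z (hz : 0 < z)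
    filter_upwards [ae_restrict_mem measurableSet_Ioi] with s (hs : 0 < s)
    rw [Real.norm_of_nonneg (by positivity)]
    gcongr
    exact sub_le_self _ (by positivity)
  · filter_upwards with s
    have hcont : Continuous fun z => Real.exp (-s - z / s) * s ^ (β - 1) := by fun_prop
    exact (hcont.tendsto' 0 _ (by simp)).mono_left nhdsWithin_le_nhds

lemma continuous_besselKIntegral_order (hz : 0 < z) : Continuous fun β => besselKIntegral β z := by
  refine continuous_iff_continuousAt.2 fun α =>
    tendsto_integral_filter_of_dominated_convergence (fun s => Real.exp (-s - z / s) *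
      s ^ (α - 1 - 1) + Real.exp (-s - z / s) * s ^ (α + 1 - 1))
    (.of_forall fun β => by fun_prop) ?_ ((integrableOn_besselKIntegral (α - 1) hz).add
      (integrableOn_besselKIntegral (α + 1) hz)) ?_
  · filter_upwards [Ioo_mem_nhds (sub_one_lt α) (lt_add_one α)] with β hβ
    filter_upwards [ae_restrict_mem measurableSet_Ioi] with s (hs : 0 < s)
    rw [Real.norm_of_nonneg (by positivity), ← mul_add]
    gcongr
    rcases le_total s 1 with h | h
    · have := rpow_le_rpow_of_exponent_ge hs h (by linarith [hβ.1] : α - 1 - 1 ≤ β - 1)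
      linarith [rpow_nonneg hs.le (α + 1 - 1)]
    · have := rpow_le_rpow_of_exponent_le h (by linarith [hβ.2] : β - 1 ≤ α + 1 - 1)
      linarith [rpow_nonneg hs.le (α - 1 - 1)]
  · filter_upwards [ae_restrict_mem measurableSet_Ioi] with s (hs : 0 < s)
    exact ((continuous_const.rpow (by fun_prop) fun _ => .inl hs.ne').tendsto α).const_mul _

end BesselKIntegral

section BesselKSeries

variable {z : ℝ} (β : ℝ)

lemma hasDerivAt_rpow_mul_besselClifford (hz : 0 < z) :
    HasDerivAt (fun z => z ^ β * besselClifford β z)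
      (z ^ (β - 1) * besselClifford (β - 1) z) z := by
  refine ((hasDerivAt_rpow_const (.inl hz.ne')).mul (hasDerivAt_besselClifford β z)).congr_deriv ?_
  have hpow : z ^ β = z ^ (β - 1) * z := by rw [← rpow_add_one hz.ne', sub_add_cancel]
  rw [besselClifford_sub_one, hpow, RCLike.ofReal_real_eq_id, id]
  ring

lemma hasDerivAt_besselKSeries (hz : 0 < z) :
    HasDerivAt (besselKSeries β) (-besselKSeries (β - 1) z) z := by
  refine (((hasDerivAt_besselClifford (-β) z).sub
    (hasDerivAt_rpow_mul_besselClifford β hz)).const_mul _).congr_deriv ?_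
  rw [besselKSeries, mul_sub_one, Real.sin_sub_pi, neg_sub', sub_neg_eq_add, div_neg]
  ring

lemma besselKSeries_neg (hz : 0 < z) : besselKSeries (-β) z = z ^ (-β) * besselKSeries β z := by
  rw [besselKSeries, besselKSeries, neg_neg, mul_neg, Real.sin_neg, div_neg, rpow_neg hz.le]
  field_simp
  ring

lemma tendsto_besselKSeries_zero {β : ℝ} (h0 : 0 < β) (h1 : β < 1) :
    Tendsto (besselKSeries β) (nhdsWithin 0 (Ioi 0)) (nhds (Real.Gamma β)) := by
  have hcont : Continuous (besselKSeries β) :=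
    continuous_const.mul ((continuous_besselClifford _).sub
      ((Real.continuous_rpow_const h0.le).mul (continuous_besselClifford _)))
  refine (hcont.tendsto' 0 _ ?_).mono_left nhdsWithin_le_nhds
  have hΓ : Real.Gamma (1 - β) ≠ 0 := (Gamma_pos_of_pos (sub_pos.2 h1)).ne'
  rw [besselKSeries, besselClifford_zero, zero_rpow h0.ne', zero_mul, sub_zero,
    ← Real.Gamma_mul_Gamma_one_sub, neg_add_eq_sub, RCLike.ofReal_real_eq_id, id,
    mul_inv_cancel_right₀ hΓ]

end BesselKSeries

section BesselK

lemma eq_zero_of_hasDerivAt_swap {β : ℝ} (h0 : 0 < β) (h1 : β < 1) {f g : ℝ → ℝ}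
    (hf : ∀ z, 0 < z → HasDerivAt f (-(z ^ (β - 1) * g z)) z)
    (hg : ∀ z, 0 < z → HasDerivAt g (-(z ^ (-β) * f z)) z)
    (hf0 : Tendsto f (nhdsWithin 0 (Ioi 0)) (nhds 0))
    (hg0 : Tendsto g (nhdsWithin 0 (Ioi 0)) (nhds 0)) {z : ℝ} (hz : 0 < z) : f z = 0 := by
  set w : ℝ → ℝ := fun z => Real.exp (-(z ^ β / β + z ^ (1 - β) / (1 - β)))
  have hβ' : 0 < 1 - β := sub_pos.2 h1
  have hwd (z : ℝ) (hz : 0 < z) : HasDerivAt w (-(z ^ (β - 1) + z ^ (-β)) * w z) z := by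
    refine (((((hasDerivAt_rpow_const (p := β) (.inl hz.ne')).div_const β).add
      ((hasDerivAt_rpow_const (p := 1 - β) (.inl hz.ne')).div_const
        (1 - β))).neg).exp).congr_deriv ?_
    rw [mul_div_cancel_left₀ _ h0.ne', mul_div_cancel_left₀ _ hβ'.ne', sub_sub_cancel_left]
    exact mul_comm _ _
  have hd (z : ℝ) (hz : 0 < z) :=
    (hwd z hz).mul (((hf z hz).pow 2).add ((hg z hz).pow 2))
  have hanti : AntitoneOn (fun z => w z * (f z ^ 2 + g z ^ 2)) (Ioi 0) := by
    refine antitoneOn_of_deriv_nonpos (convex_Ioi 0)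
      (fun z hz => (hd z hz).continuousAt.continuousWithinAt)
      (fun z hz => (hd z (interior_subset hz)).differentiableAt.differentiableWithinAt)
      fun z hz => ?_
    have hz : 0 < z := interior_subset hz
    refine (hd z hz).deriv.trans_le ?_
    have : 0 ≤ (z ^ (β - 1) + z ^ (-β)) * w z * (f z + g z) ^ 2 := by positivity
    simp only [Pi.add_apply, Pi.pow_apply]
    push_cast
    linarith
  have hlim : Tendsto (fun z => w z * (f z ^ 2 + g z ^ 2)) (nhdsWithin 0 (Ioi 0)) (nhds 0) := by
    have hwc : Continuous w := by
      have := Real.continuous_rpow_const h0.le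
      have := Real.continuous_rpow_const hβ'.le
      fun_prop
    simpa using ((hwc.tendsto 0).mono_left nhdsWithin_le_nhds).mul ((hf0.pow 2).add (hg0.pow 2))
  have hle : w z * (f z ^ 2 + g z ^ 2) ≤ 0 := by
    refine ge_of_tendsto hlim ?_
    filter_upwards [Ioo_mem_nhdsGT hz] with y hy using hanti hy.1 hz hy.2.le
  have := nonpos_of_mul_nonpos_right hle (Real.exp_pos _)
  nlinarith [sq_nonneg (f z), sq_nonneg (g z)]

lemma besselKIntegral_eq_besselKSeries_of_mem_Ioo {β : ℝ} (hβ : β ∈ Ioo (0 : ℝ) 1) {z : ℝ}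
    (hz : 0 < z) : besselKIntegral β z = besselKSeries β z := by
  have hderiv (β : ℝ) {z : ℝ} (hz : 0 < z) :
      HasDerivAt (fun z => besselKIntegral β z - besselKSeries β z)
        (-(z ^ (β - 1) * (besselKIntegral (1 - β) z - besselKSeries (1 - β) z))) z := by
    refine ((hasDerivAt_besselKIntegral β hz).sub (hasDerivAt_besselKSeries β hz)).congr_deriv ?_
    rw [← neg_sub 1 β, besselKIntegral_neg _ hz, besselKSeries_neg _ hz]
    ring
  have hlim {β : ℝ} (hβ : β ∈ Ioo (0 : ℝ) 1) :
      Tendsto (fun z => besselKIntegral β z - besselKSeries β z) (nhdsWithin 0 (Ioi 0))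
        (nhds 0) := by
    simpa using (tendsto_besselKIntegral_zero hβ.1).sub (tendsto_besselKSeries_zero hβ.1 hβ.2)
  refine sub_eq_zero.1 (eq_zero_of_hasDerivAt_swap hβ.1 hβ.2 (fun z hz => hderiv β hz)
    (fun z hz => (hderiv (1 - β) hz).congr_deriv ?_) (hlim hβ)
    (hlim ⟨sub_pos.2 hβ.2, sub_lt_self 1 hβ.1⟩) hz)
  rw [sub_sub_cancel, sub_sub_cancel_left]

theorem besselKIntegral_eq_besselKSeries {β : ℝ} (hβ : ∀ n : ℤ, β ≠ n) {z : ℝ} (hz : 0 < z) :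
    besselKIntegral β z = besselKSeries β z := by
  have hsub {β : ℝ} (h : ∀ z, 0 < z → besselKIntegral β z = besselKSeries β z) {z : ℝ}
      (hz : 0 < z) : besselKIntegral (β - 1) z = besselKSeries (β - 1) z := by
    have heq : besselKIntegral β =ᶠ[nhds z] besselKSeries β := by
      filter_upwards [Ioi_mem_nhds hz] with y hy using h y hy
    exact neg_injective ((hasDerivAt_besselKIntegral β hz).unique
      ((hasDerivAt_besselKSeries β hz).congr_of_eventuallyEq heq))
  have hneg {β : ℝ} (h : ∀ z, 0 < z → besselKIntegral β z = besselKSeries β z) {z : ℝ}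
      (hz : 0 < z) : besselKIntegral (-β) z = besselKSeries (-β) z := by
    rw [besselKIntegral_neg β hz, h z hz, besselKSeries_neg β hz]
  have hfract : Int.fract β ∈ Ioo (0 : ℝ) 1 :=
    ⟨Int.fract_pos.2 (hβ _), Int.fract_lt_one β⟩
  suffices h : ∀ n : ℤ, ∀ z, 0 < z →
      besselKIntegral (Int.fract β + n) z = besselKSeries (Int.fract β + n) z by
    simpa using h ⌊β⌋ z hz
  intro n
  induction n using Int.induction_on with
  | zero => simpa using fun z hz => besselKIntegral_eq_besselKSeries_of_mem_Ioo hfract hz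
  | succ n ih =>
    intro z hz
    rw [show Int.fract β + ((n + 1 : ℤ) : ℝ) = -(-(Int.fract β + n) - 1) by push_cast; ring]
    exact hneg (fun z hz => hsub (fun z hz => hneg ih hz) hz) hz
  | pred n ih =>
    intro z hz
    rw [show Int.fract β + ((-n - 1 : ℤ) : ℝ) = Int.fract β + (-n : ℤ) - 1 by push_cast; ring]
    exact hsub ih hz

lemma eventually_forall_ne_intCast (α : ℝ) :
    ∀ᶠ β : ℝ in nhdsWithin α {α}ᶜ, ∀ n : ℤ, β ≠ n := by
  have hclosed : IsClosed ((Int.cast : ℤ → ℝ) '' {n : ℤ | (n : ℝ) ≠ α}) :=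
    Int.isClosedEmbedding_coe_real.isClosedMap _ (isClosed_discrete _)
  have hmem := hclosed.isOpen_compl.mem_nhds (x := α) fun ⟨_, hn, h⟩ => hn h
  filter_upwards [self_mem_nhdsWithin, mem_nhdsWithin_of_mem_nhds hmem] with β hβ hβ' n hn
  exact hβ' ⟨n, fun h => hβ (hn.trans h), hn.symm⟩

theorem besselKt_eq_besselKIntegral (α : ℝ) {x : ℝ} (hx : 0 < x) :
    besselKt α x = (x / 2) ^ (-(2 * α)) * besselKIntegral α (x ^ 2 / 4) / 2 := by
  have hx2 : 0 < x / 2 := half_pos hx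
  have hz : 0 < x ^ 2 / 4 := by positivity
  suffices h : besselK α x = (x / 2) ^ (-α) * besselKIntegral α (x ^ 2 / 4) / 2 by
    rw [besselKt, h, show -(2 * α) = -α + -α by ring, rpow_add hx2]
    ring
  have hcont : Continuous fun β => (x / 2) ^ (-β) * besselKIntegral β (x ^ 2 / 4) / 2 :=
    ((continuous_const.rpow continuous_neg fun _ => .inl hx2.ne').mul
      (continuous_besselKIntegral_order hz)).div_const 2
  refine Tendsto.limUnder_eq (((hcont.tendsto α).mono_left nhdsWithin_le_nhds).congr' ?_)
  filter_upwards [eventually_forall_ne_intCast α] with β hβ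
  rw [besselKIntegral_eq_besselKSeries hβ hz, besselI_eq_rpow_mul_besselClifford _ hx,
    besselI_eq_rpow_mul_besselClifford _ hx, besselKSeries, show x ^ 2 / 4 = (x / 2) ^ 2 by ring,
    ← rpow_natCast (x / 2) 2, ← rpow_mul hx2.le, rpow_neg hx2.le, mul_comm β π, Nat.cast_two,
    two_mul, rpow_add hx2]
  field_simp

end BesselK

section GaussianIntegral

lemma integral_rpow_mul_exp_neg_mul_sq {c ρ : ℝ} (hc : 0 < c) (hρ : 0 < ρ) :
    ∫ x in Ioi (0 : ℝ), x ^ (2 * c - 1) * Real.exp (-ρ * x ^ 2)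
      = ρ ^ (-c) * Real.Gamma c / 2 := by
  have h := integral_rpow_mul_exp_neg_mul_rpow (p := 2) (q := 2 * c - 1) (b := ρ) two_pos
    (by linarith) hρ
  simp only [Real.rpow_two] at h
  rw [h, show -(2 * c - 1 + 1) / 2 = -c by ring, show (2 * c - 1 + 1) / 2 = c by ring]
  ring

/-- The `m`-th term of the power series of `sphericalBessel l (x ^ 2 * G)` in `x`, multiplied by
`x ^ (2 * l) * exp (-ρ * x ^ 2)`, for integrating the series term by term. -/
noncomputable def gaussianTerm (l ρ : ℝ) (G : ℂ) (m : ℕ) (x : ℝ) : ℂ :=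
  Real.Gamma (l + 1 / 2) * besselCliffordCoeff (l - 1 / 2) m * (-(G / 4)) ^ m *
    ((x ^ (2 * (m + (l + 1 / 2)) - 1) * Real.exp (-ρ * x ^ 2) : ℝ) : ℂ)

variable {l ρ : ℝ} (G : ℂ)

lemma hasSum_gaussianTerm {x : ℝ} (hx : 0 < x) :
    HasSum (fun m => gaussianTerm l ρ G m x)
      (((x ^ (2 * l) * Real.exp (-ρ * x ^ 2) : ℝ) : ℂ) * sphericalBessel l (x ^ 2 * G)) := by
  refine (((hasSum_besselClifford (l - 1 / 2) (-(x ^ 2 * G / 4) : ℂ)).mul_left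
    (Real.Gamma (l + 1 / 2) : ℂ)).mul_left _).congr_fun fun m => ?_
  have hpow : x ^ (2 * (m + (l + 1 / 2)) - 1) = x ^ (2 * l) * (x ^ 2) ^ m := by
    rw [← pow_mul, ← Real.rpow_natCast, ← Real.rpow_add hx]
    push_cast
    ring_nf
  rw [gaussianTerm, hpow, smul_eq_mul, RCLike.ofReal_eq_complex_ofReal,
    show -((x : ℂ) ^ 2 * G / 4) = x ^ 2 * -(G / 4) by ring, mul_pow]
  push_cast
  ring

lemma integral_gaussianTerm (hl : 0 < l) (hρ : 0 < ρ) (m : ℕ) :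
    ∫ x in Ioi (0 : ℝ), gaussianTerm l ρ G m x
      = ((Real.Gamma (l + 1 / 2) * ρ ^ (-(l + 1 / 2)) / 2 : ℝ) : ℂ) *
        ((-G / (4 * ρ)) ^ m / m.factorial) := by
  have hm : 0 < m + (l + 1 / 2) := by positivity
  have hΓ : (Real.Gamma (m + (l + 1 / 2)) : ℂ) ≠ 0 :=
    Complex.ofReal_ne_zero.2 (Gamma_pos_of_pos hm).ne'
  have hρ' : (ρ : ℂ) ≠ 0 := Complex.ofReal_ne_zero.2 hρ.ne'
  simp only [gaussianTerm]
  rw [integral_const_mul, integral_complex_ofReal, integral_rpow_mul_exp_neg_mul_sq hm hρ,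
    besselCliffordCoeff, show m + (l - 1 / 2) + 1 = m + (l + 1 / 2) by ring, neg_add,
    Real.rpow_add hρ, Real.rpow_neg hρ.le, Real.rpow_natCast,
    show -G / (4 * (ρ : ℂ)) = (ρ : ℂ)⁻¹ * -(G / 4) by field_simp, mul_pow, inv_pow]
  push_cast
  generalize Real.Gamma (m + (l + 1 / 2)) = γ at hΓ ⊢
  field_simp

lemma integral_norm_gaussianTerm (m : ℕ) :
    ∫ x in Ioi (0 : ℝ), ‖gaussianTerm l ρ G m x‖
      = ‖∫ x in Ioi (0 : ℝ), gaussianTerm l ρ G m x‖ := by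
  have h0 : 0 ≤ ∫ x in Ioi (0 : ℝ),
      x ^ (2 * (m + (l + 1 / 2)) - 1) * Real.exp (-ρ * x ^ 2) :=
    setIntegral_nonneg measurableSet_Ioi fun x (hx : 0 < x) => by positivity
  simp only [gaussianTerm]
  rw [integral_const_mul, integral_complex_ofReal, norm_mul, Complex.norm_real,
    Real.norm_of_nonneg h0, ← integral_const_mul]
  refine setIntegral_congr_fun measurableSet_Ioi fun x (hx : 0 < x) => ?_
  rw [norm_mul, Complex.norm_real, Real.norm_of_nonneg (by positivity)]

theorem integral_rpow_mul_exp_neg_mul_sq_mul_sphericalBessel (hl : 0 < l) (hρ : 0 < ρ) :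
    ∫ x in Ioi (0 : ℝ), ((x ^ (2 * l) * Real.exp (-ρ * x ^ 2) : ℝ) : ℂ) *
        sphericalBessel l (x ^ 2 * G)
      = ((Real.Gamma (l + 1 / 2) * ρ ^ (-(l + 1 / 2)) / 2 : ℝ) : ℂ) *
        Complex.exp (-G / (4 * ρ)) := by
  have hint (m : ℕ) : IntegrableOn (gaussianTerm l ρ G m) (Ioi 0) :=
    (integrableOn_rpow_mul_exp_neg_mul_sq hρ
      (by linarith [m.cast_nonneg (α := ℝ)])).ofReal.const_mul _
  have hexp := (NormedSpace.expSeries_div_hasSum_exp (𝔸 := ℂ) (-G / (4 * ρ))).mul_left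
    ((Real.Gamma (l + 1 / 2) * ρ ^ (-(l + 1 / 2)) / 2 : ℝ) : ℂ)
  rw [← Complex.exp_eq_exp_ℂ] at hexp
  have hsum := hexp.congr_fun (integral_gaussianTerm G hl hρ)
  have hnorm : Summable fun m => ∫ x in Ioi (0 : ℝ), ‖gaussianTerm l ρ G m x‖ := by
    simpa only [integral_norm_gaussianTerm G] using hsum.summable.norm
  refine (setIntegral_congr_fun measurableSet_Ioi fun x hx => ?_).trans
    ((hasSum_integral_of_summable_integral_norm hint hnorm).unique hsum)
  exact (hasSum_gaussianTerm G hx).tsum_eq.symm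

end GaussianIntegral

section LaplaceTransform

variable {a : ℝ}

lemma integrableOn_rpow_mul_exp_neg_mul (ha : 0 < a) {r : ℝ} (hr : 0 < r) :
    IntegrableOn (fun s : ℝ => s ^ (a - 1) * Real.exp (-r * s)) (Ioi 0) := by
  simpa using integrableOn_rpow_mul_exp_neg_mul_rpow (p := 1) (by linarith) one_pos hr

lemma norm_rpow_mul_cexp_neg_mul (W : ℂ) {s : ℝ} (hs : 0 < s) :
    ‖((s ^ (a - 1) : ℝ) : ℂ) * Complex.exp (-W * s)‖ = s ^ (a - 1) * Real.exp (-W.re * s) := by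
  rw [norm_mul, Complex.norm_real, Real.norm_of_nonneg (by positivity), Complex.norm_exp,
    Complex.re_mul_ofReal, Complex.neg_re]

lemma differentiableAt_integral_rpow_mul_cexp_neg_mul (ha : 0 < a) {W : ℂ} (hW : 0 < W.re) :
    DifferentiableAt ℂ (fun W : ℂ => ∫ s in Ioi (0 : ℝ), ((s ^ (a - 1) : ℝ) : ℂ) *
      Complex.exp (-W * s)) W := by
  refine (hasDerivAt_integral_of_dominated_loc_of_deriv_le (s := {z | W.re / 2 < z.re})
    (F' := fun z (s : ℝ) => -(((s ^ (a + 1 - 1) : ℝ) : ℂ) * Complex.exp (-z * s)))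
    (bound := fun s => s ^ (a + 1 - 1) * Real.exp (-(W.re / 2) * s))
    ((isOpen_lt continuous_const Complex.continuous_re).mem_nhds (half_lt_self hW))
    (.of_forall fun z => by fun_prop) ?_ (by fun_prop) ?_
    (integrableOn_rpow_mul_exp_neg_mul (by positivity) (half_pos hW)) ?_).2.differentiableAt
  · refine (integrableOn_rpow_mul_exp_neg_mul ha hW).mono' (by fun_prop) ?_
    filter_upwards [ae_restrict_mem measurableSet_Ioi] with s hs
    exact (norm_rpow_mul_cexp_neg_mul W hs).le
  · filter_upwards [ae_restrict_mem measurableSet_Ioi] with s (hs : 0 < s) z (hz : W.re / 2 < z.re)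
    rw [norm_neg, norm_rpow_mul_cexp_neg_mul z hs]
    gcongr
  · filter_upwards [ae_restrict_mem measurableSet_Ioi] with s (hs : 0 < s) z _
    refine ((((hasDerivAt_neg' z).mul_const (s : ℂ)).cexp).const_mul _).congr_deriv ?_
    rw [show a + 1 - 1 = a - 1 + 1 by ring, rpow_add_one hs.ne']
    push_cast
    ring

theorem integral_rpow_mul_cexp_neg_mul_Ioi (ha : 0 < a) {W : ℂ} (hW : 0 < W.re) :
    ∫ s in Ioi (0 : ℝ), ((s ^ (a - 1) : ℝ) : ℂ) * Complex.exp (-W * s)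
      = Real.Gamma a * W ^ (-a : ℂ) := by
  have hopen : IsOpen {z : ℂ | 0 < z.re} := isOpen_lt continuous_const Complex.continuous_re
  have hleft : DifferentiableOn ℂ (fun W : ℂ => ∫ s in Ioi (0 : ℝ), ((s ^ (a - 1) : ℝ) : ℂ) *
      Complex.exp (-W * s)) {z | 0 < z.re} := fun z hz =>
    (differentiableAt_integral_rpow_mul_cexp_neg_mul ha hz).differentiableWithinAt
  have hright : DifferentiableOn ℂ (fun W : ℂ => Real.Gamma a * W ^ (-a : ℂ)) {z | 0 < z.re} :=
    fun z hz => ((hasDerivAt_id' z).cpow_const (.inl hz)).differentiableAt.const_mul _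
      |>.differentiableWithinAt
  refine (hleft.analyticOnNhd hopen).eqOn_of_preconnected_of_frequently_eq
    (hright.analyticOnNhd hopen) (convex_halfSpace_re_gt 0).isPreconnected
    (z₀ := ((1 : ℝ) : ℂ)) (by simp) (frequently_nhdsNE_of_forall_ofReal fun r hr => ?_) hW
  have hr : 0 < r := one_pos.trans hr
  have h := congrArg (fun x : ℝ => (x : ℂ)) (Real.integral_rpow_mul_exp_neg_mul_Ioi ha hr)
  rw [← integral_complex_ofReal, one_div, inv_rpow hr.le, ← rpow_neg hr.le] at h
  simpa [Complex.ofReal_cpow hr.le, mul_comm] using h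

end LaplaceTransform

/-- The weight `x ^ (2 * l) * 2 (x / 2) ^ (l - 1 / 2) K_{l - 1 / 2}(x)` against which products of
spherical Bessel functions are integrated over the half-line. -/
noncomputable def besselWeight (l x : ℝ) : ℝ :=
  x ^ (2 * l) * besselKIntegral (l - 1 / 2) (x ^ 2 / 4)

section BesselWeight

variable {l : ℝ}

lemma exp_neg_le_rpow_neg_half {u : ℝ} (hu : 0 < u) : Real.exp (-u) ≤ u ^ (-(1 / 2) : ℝ) := by
  rw [Real.exp_neg, rpow_neg hu.le, ← Real.sqrt_eq_rpow]
  refine inv_anti₀ (Real.sqrt_pos.2 hu) ((Real.sqrt_le_iff.2 ⟨by positivity, ?_⟩).trans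
    (Real.add_one_le_exp u))
  nlinarith

lemma exp_mul_exp_neg_sub_sq_div_le {p x s : ℝ} (hp : |p| < 1) (hx : 0 < x) (hs : 0 < s) :
    Real.exp (p * x) * Real.exp (-s - x ^ 2 / 4 / s)
      ≤ ((1 - p) / 8) ^ (-(1 / 2) : ℝ) * (Real.exp (-((1 - p) / 2) * x) * x⁻¹)
        * (Real.exp (-((1 - p) / 2) * s) * s ^ (1 / 2 : ℝ)) := by
  obtain ⟨hp0, hp1⟩ := abs_lt.1 hp
  have hε : 0 < (1 - p) / 8 := by linarith
  have hamgm : x ≤ s + x ^ 2 / 4 / s := by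
    have : s + x ^ 2 / 4 / s - x = (s - x / 2) ^ 2 / s := by field_simp; ring
    linarith [div_nonneg (sq_nonneg (s - x / 2)) hs.le]
  have hexponent : p * x + (-s - x ^ 2 / 4 / s)
      ≤ -((1 - p) / 2) * x + -((1 - p) / 2) * s + -((1 - p) / 8 * (x ^ 2 / s)) := by
    have := mul_le_mul_of_nonneg_left hamgm (by linarith : 0 ≤ (1 + p) / 2)
    have : x ^ 2 / 4 / s = x ^ 2 / s / 4 := div_right_comm _ _ _
    nlinarith
  calc Real.exp (p * x) * Real.exp (-s - x ^ 2 / 4 / s)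
      ≤ Real.exp (-((1 - p) / 2) * x) * Real.exp (-((1 - p) / 2) * s)
        * Real.exp (-((1 - p) / 8 * (x ^ 2 / s))) := by
        rw [← Real.exp_add, ← Real.exp_add, ← Real.exp_add]
        exact Real.exp_le_exp.2 hexponent
    _ ≤ Real.exp (-((1 - p) / 2) * x) * Real.exp (-((1 - p) / 2) * s)
        * ((1 - p) / 8 * (x ^ 2 / s)) ^ (-(1 / 2) : ℝ) := by
        gcongr
        exact exp_neg_le_rpow_neg_half (by positivity)
    _ = _ := by
        rw [mul_rpow hε.le (by positivity), div_rpow (by positivity) hs.le, rpow_neg hs.le,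
          ← Real.rpow_natCast, ← rpow_mul hx.le, Nat.cast_two, mul_neg,
          mul_one_div_cancel two_ne_zero, rpow_neg_one, div_inv_eq_mul]
        ring

lemma integrable_besselWeight_prod (hl : 0 < l) {p : ℝ} (hp : |p| < 1) :
    Integrable (fun z : ℝ × ℝ => z.1 ^ (2 * l) * Real.exp (p * z.1) *
        (Real.exp (-z.2 - z.1 ^ 2 / 4 / z.2) * z.2 ^ (l - 1 / 2 - 1)))
      ((volume.restrict (Ioi 0)).prod (volume.restrict (Ioi 0))) := by
  have hε : 0 < (1 - p) / 2 := by linarith [abs_lt.1 hp]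
  refine Integrable.mono' (((integrableOn_rpow_mul_exp_neg_mul (a := 2 * l) (by positivity)
    hε).const_mul (((1 - p) / 8) ^ (-(1 / 2) : ℝ))).mul_prod
      (integrableOn_rpow_mul_exp_neg_mul hl hε)) (by fun_prop) ?_
  rw [Measure.prod_restrict]
  filter_upwards [ae_restrict_mem (measurableSet_Ioi.prod measurableSet_Ioi)]
    with ⟨x, s⟩ ⟨(hx : 0 < x), (hs : 0 < s)⟩
  rw [Real.norm_of_nonneg (by positivity)]
  calc x ^ (2 * l) * Real.exp (p * x) * (Real.exp (-s - x ^ 2 / 4 / s) * s ^ (l - 1 / 2 - 1))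
      = x ^ (2 * l) * s ^ (l - 1 / 2 - 1) *
        (Real.exp (p * x) * Real.exp (-s - x ^ 2 / 4 / s)) := by ring
    _ ≤ x ^ (2 * l) * s ^ (l - 1 / 2 - 1) *
        (((1 - p) / 8) ^ (-(1 / 2) : ℝ) * (Real.exp (-((1 - p) / 2) * x) * x⁻¹)
          * (Real.exp (-((1 - p) / 2) * s) * s ^ (1 / 2 : ℝ))) := by
        exact mul_le_mul_of_nonneg_left (exp_mul_exp_neg_sub_sq_div_le hp hx hs) (by positivity)
    _ = _ := by
        rw [show l - 1 = l - 1 / 2 - 1 + 1 / 2 by ring, rpow_add hs, rpow_sub_one hx.ne']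
        ring

lemma integrableOn_besselWeight_mul_exp (hl : 0 < l) {p : ℝ} (hp : |p| < 1) :
    IntegrableOn (fun x => besselWeight l x * Real.exp (p * x)) (Ioi 0) := by
  refine (integrable_besselWeight_prod hl hp).integral_prod_left.congr (.of_forall fun x => ?_)
  simp only [besselWeight, besselKIntegral, integral_const_mul]
  ring

lemma integrable_besselWeight_prod_mul_sphericalBessel (hl : 0 < l) {g : ℂ} (hg : |g.im| < 1) :
    Integrable (fun z : ℝ × ℝ => ((z.1 ^ (2 * l) *
        (Real.exp (-z.2 - z.1 ^ 2 / 4 / z.2) * z.2 ^ (l - 1 / 2 - 1)) : ℝ) : ℂ) *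
          sphericalBessel l ((g * z.1) ^ 2))
      ((volume.restrict (Ioi 0)).prod (volume.restrict (Ioi 0))) := by
  have := continuous_sphericalBessel (l := l)
  refine Integrable.mono' (integrable_besselWeight_prod hl (p := |g.im|) (by rwa [abs_abs]))
    (.mul (by fun_prop) (by fun_prop)) ?_
  rw [Measure.prod_restrict]
  filter_upwards [ae_restrict_mem (measurableSet_Ioi.prod measurableSet_Ioi)]
    with ⟨x, s⟩ ⟨(hx : 0 < x), (hs : 0 < s)⟩
  have hS := norm_sphericalBessel_sq_le hl (g * x)
  rw [Complex.im_mul_ofReal, abs_mul, abs_of_pos hx] at hS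
  rw [norm_mul, Complex.norm_real, Real.norm_of_nonneg (by positivity), mul_right_comm]
  gcongr

lemma integral_rpow_mul_exp_neg_sub_sq_div_mul_sphericalBessel (hl : 0 < l) (G : ℂ) {s : ℝ}
    (hs : 0 < s) :
    ∫ x in Ioi (0 : ℝ), ((x ^ (2 * l) * (Real.exp (-s - x ^ 2 / 4 / s) * s ^ (l - 1 / 2 - 1)) : ℝ)
        : ℂ) * sphericalBessel l (x ^ 2 * G)
      = ((2 ^ (2 * l) * Real.Gamma (l + 1 / 2) : ℝ) : ℂ) *
        (((s ^ (2 * l - 1) : ℝ) : ℂ) * Complex.exp (-(1 + G) * s)) := by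
  have hs' : (s : ℂ) ≠ 0 := Complex.ofReal_ne_zero.2 hs.ne'
  have hgauss (x : ℝ) : x ^ (2 * l) * (Real.exp (-s - x ^ 2 / 4 / s) * s ^ (l - 1 / 2 - 1))
      = s ^ (l - 1 / 2 - 1) * Real.exp (-s) *
        (x ^ (2 * l) * Real.exp (-(4 * s)⁻¹ * x ^ 2)) := by
    rw [show -s - x ^ 2 / 4 / s = -s + -(4 * s)⁻¹ * x ^ 2 by field_simp; ring, Real.exp_add]
    ring
  have hpow : s ^ (l - 1 / 2 - 1) * ((4 * s)⁻¹ ^ (-(l + 1 / 2)) / 2)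
      = 2 ^ (2 * l) * s ^ (2 * l - 1) := by
    rw [inv_rpow (by positivity), rpow_neg (by positivity), inv_inv,
      mul_rpow four_pos.le hs.le, show (4 : ℝ) = 2 ^ (2 : ℝ) by norm_num, ← rpow_mul two_pos.le,
      show (2 : ℝ) * (l + 1 / 2) = 2 * l + 1 by ring, rpow_add_one two_ne_zero,
      show 2 * l - 1 = l - 1 / 2 - 1 + (l + 1 / 2) by ring, rpow_add hs _ (l + 1 / 2)]
    ring
  have hexp : Complex.exp (-(1 + G) * s)
      = (Real.exp (-s) : ℂ) * Complex.exp (-G / (4 * ((4 * s)⁻¹ : ℝ))) := by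
    rw [Complex.ofReal_exp, ← Complex.exp_add]
    push_cast
    congr 1
    field_simp
    ring
  simp_rw [hgauss, Complex.ofReal_mul (_ * _), mul_assoc]
  rw [integral_const_mul, integral_rpow_mul_exp_neg_mul_sq_mul_sphericalBessel G hl
    (by positivity), hexp]
  have hpow' := congrArg (fun r : ℝ => (r : ℂ)) hpow
  push_cast at hpow' ⊢
  linear_combination (Complex.exp (-s) * Real.Gamma (l + 1 / 2) *
    Complex.exp (-G / (4 * (4 * (s : ℂ))⁻¹))) * hpow'

theorem integral_besselWeight_mul_sphericalBessel (hl : 0 < l) {g : ℂ} (hg : |g.im| < 1) :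
    ∫ x in Ioi (0 : ℝ), besselWeight l x * sphericalBessel l ((g * x) ^ 2)
      = ((2 ^ (2 * l) * Real.Gamma (l + 1 / 2) * Real.Gamma (2 * l) : ℝ) : ℂ) *
        (1 + g ^ 2) ^ (-(2 * l : ℂ)) := by
  have hre : 0 < (1 + g ^ 2).re := by
    simp only [Complex.add_re, Complex.one_re, sq, Complex.mul_re]
    nlinarith [sq_lt_one_iff_abs_lt_one g.im |>.2 hg, sq_nonneg g.re]
  have hx (x : ℝ) : besselWeight l x * sphericalBessel l ((g * x) ^ 2)
      = ∫ s in Ioi (0 : ℝ), ((x ^ (2 * l) * (Real.exp (-s - x ^ 2 / 4 / s) *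
          s ^ (l - 1 / 2 - 1)) : ℝ) : ℂ) * sphericalBessel l ((g * x) ^ 2) := by
    rw [integral_mul_const, integral_complex_ofReal, integral_const_mul, besselWeight,
      besselKIntegral]
  simp_rw [hx]
  rw [integral_integral_swap (integrable_besselWeight_prod_mul_sphericalBessel hl hg)]
  simp_rw [mul_pow, mul_comm (g ^ 2)]
  rw [setIntegral_congr_fun measurableSet_Ioi fun s hs =>
      integral_rpow_mul_exp_neg_sub_sq_div_mul_sphericalBessel hl (g ^ 2) hs,
    integral_const_mul, integral_rpow_mul_cexp_neg_mul_Ioi (by positivity) hre]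
  push_cast
  ring

end BesselWeight

lemma exists_sq_eq_law_of_cosines_abs_im_le (κ : ℂ) (b : ℝ) {v : ℝ} (hv : v ∈ Icc (-1 : ℝ) 1) :
    ∃ g : ℂ, g ^ 2 = κ ^ 2 + b ^ 2 - 2 * κ * b * v ∧ |g.im| ≤ |κ.im| := by
  obtain ⟨g, hg⟩ := IsAlgClosed.exists_pow_nat_eq (κ ^ 2 + b ^ 2 - 2 * κ * b * v : ℂ) two_pos
  refine ⟨g, hg, sq_le_sq.1 ?_⟩
  have hre := congrArg Complex.re hg
  have him := congrArg Complex.im hg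
  simp only [sq, Complex.add_re, Complex.sub_re, Complex.mul_re, Complex.add_im, Complex.sub_im,
    Complex.mul_im, Complex.ofReal_re, Complex.ofReal_im, Complex.re_ofNat, Complex.im_ofNat]
    at hre him
  have hv2 : 0 ≤ b ^ 2 * (1 - v ^ 2) :=
    mul_nonneg (sq_nonneg b) (sub_nonneg.2 (sq_le_one_iff_abs_le_one v |>.2 (abs_le.2 hv)))
  set m := κ.re - b * v with hm
  have hre' : g.re ^ 2 - g.im ^ 2 = m ^ 2 + b ^ 2 * (1 - v ^ 2) - κ.im ^ 2 := by
    rw [hm]; linear_combination hre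
  have him' : g.re * g.im = m * κ.im := by rw [hm]; linear_combination him / 2
  by_contra! h
  nlinarith [sq_nonneg g.re, sq_nonneg m, hre', congrArg (· ^ 2) him']

section HankelTransforms

variable {l : ℝ}

lemma integrable_prod_mul_sphericalBessel (hl : 0 < l) {f : ℝ → ℂ} {κ : ℂ}
    (hf : IntegrableOn (fun x => f x * (Real.exp (|κ.im| * x) : ℂ)) (Ioi 0)) (b : ℝ) :
    Integrable (fun z : ℝ × ℝ => f z.1 *
        sphericalBessel l ((κ ^ 2 + b ^ 2 - 2 * κ * b * z.2) * z.1 ^ 2))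
      ((volume.restrict (Ioi 0)).prod (gegenbauerMeasure l)) := by
  have := isProbabilityMeasure_gegenbauerMeasure hl
  have hcont := continuous_sphericalBessel (l := l)
  have hfm : AEStronglyMeasurable f (volume.restrict (Ioi 0)) := by
    refine (hf.aestronglyMeasurable.mul (f := fun x : ℝ => f x * _) (g := fun x : ℝ =>
      (Real.exp (-(|κ.im| * x)) : ℂ)) (by fun_prop)).congr (.of_forall fun x => ?_)
    simp [mul_assoc, ← Complex.exp_add]
  refine (hf.norm.comp_fst (gegenbauerMeasure l)).mono' (hfm.comp_fst.mul (by fun_prop)) ?_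
  filter_upwards [Measure.quasiMeasurePreserving_fst.ae (ae_restrict_mem measurableSet_Ioi),
    Measure.quasiMeasurePreserving_snd.ae (ae_gegenbauerMeasure_mem_Icc l)]
    with ⟨x, v⟩ (hx : 0 < x) hv
  obtain ⟨g, hg, him⟩ := exists_sq_eq_law_of_cosines_abs_im_le κ b hv
  have hS := norm_sphericalBessel_sq_le hl (g * x)
  rw [Complex.im_mul_ofReal, abs_mul, abs_of_pos hx] at hS
  rw [← hg, ← mul_pow, norm_mul, norm_mul, Complex.norm_real,
    Real.norm_of_nonneg (Real.exp_nonneg _)]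
  gcongr
  exact hS.trans (by gcongr)

lemma integral_mul_sphericalBessel_mul_sphericalBessel (hl : 0 < l) {f : ℝ → ℂ} {κ : ℂ}
    (hf : IntegrableOn (fun x => f x * (Real.exp (|κ.im| * x) : ℂ)) (Ioi 0)) (b : ℝ) :
    ∫ x in Ioi (0 : ℝ), f x * (sphericalBessel l ((κ * x) ^ 2) * sphericalBessel l ((b * x) ^ 2))
      = ∫ v : ℝ, (∫ x in Ioi (0 : ℝ), f x *
          sphericalBessel l ((κ ^ 2 + b ^ 2 - 2 * κ * b * v) * x ^ 2)) ∂(gegenbauerMeasure l) := by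
  have := isProbabilityMeasure_gegenbauerMeasure hl
  rw [← integral_integral_swap (integrable_prod_mul_sphericalBessel hl hf b)]
  congr with x
  rw [← integral_sphericalBessel hl, integral_const_mul]
  congr with v
  ring_nf

theorem integral_besselWeight_mul_sphericalBessel_mul_sphericalBessel (hl : 0 < l) {κ : ℂ}
    (hκ : |κ.im| < 1) (b : ℝ) :
    ∫ x in Ioi (0 : ℝ), besselWeight l x *
        (sphericalBessel l ((κ * x) ^ 2) * sphericalBessel l ((b * x) ^ 2))
      = ((2 ^ (2 * l) * Real.Gamma (l + 1 / 2) * Real.Gamma (2 * l) : ℝ) : ℂ) *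
        ((1 + κ ^ 2 - b ^ 2) ^ 2 + 4 * b ^ 2) ^ (-(l : ℂ)) := by
  have hint :=
    (integrableOn_besselWeight_mul_exp hl (p := |κ.im|) (by rwa [abs_abs])).ofReal (𝕜 := ℂ)
  have hAB : |(2 * Complex.I * κ * b : ℂ).im| < (1 + κ ^ 2 + b ^ 2 : ℂ).re := by
    simp only [sq, Complex.add_re, Complex.mul_re, Complex.mul_im, Complex.one_re,
      Complex.ofReal_re, Complex.ofReal_im, Complex.I_re, Complex.I_im, Complex.re_ofNat,
      Complex.im_ofNat]
    ring_nf
    have := sq_lt_one_iff_abs_lt_one κ.im |>.2 hκ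
    rw [abs_lt]
    constructor <;> nlinarith [sq_nonneg (κ.re + b), sq_nonneg (κ.re - b)]
  rw [integral_mul_sphericalBessel_mul_sphericalBessel hl (by simpa [IntegrableOn] using hint) b,
    show (1 + κ ^ 2 - b ^ 2) ^ 2 + 4 * b ^ 2
      = (1 + κ ^ 2 + b ^ 2) ^ 2 + (2 * Complex.I * κ * b) ^ 2 by
        linear_combination -(4 * κ ^ 2 * b ^ 2) * Complex.I_sq,
    ← integral_linear_cpow hl hAB, ← integral_const_mul]
  refine integral_congr_ae ?_
  filter_upwards [ae_gegenbauerMeasure_mem_Icc l] with v hv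
  obtain ⟨g, hg, him⟩ := exists_sq_eq_law_of_cosines_abs_im_le κ b hv
  simp_rw [← hg, ← mul_pow]
  rw [integral_besselWeight_mul_sphericalBessel hl (him.trans_lt hκ), hg]
  congr 2
  linear_combination -(2 * κ * b * v) * Complex.I_sq

theorem integral_besselWeight_mul_three_sphericalBessel (hl : 0 < l) {p : ℝ} (hp : |p| < 1)
    (a b : ℝ) :
    ∫ x in Ioi (0 : ℝ), besselWeight l x * sphericalBessel l ((b * x) ^ 2) *
        (sphericalBessel l (-(p * x) ^ 2) * sphericalBessel l ((a * x) ^ 2))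
      = ((2 ^ (2 * l) * Real.Gamma (l + 1 / 2) * Real.Gamma (2 * l) : ℝ) : ℂ) *
        ∫ v : ℝ, ((1 + (a ^ 2 - p ^ 2 - 2 * Complex.I * p * a * v) - b ^ 2) ^ 2 + 4 * b ^ 2)
          ^ (-(l : ℂ)) ∂(gegenbauerMeasure l) := by
  have hint : IntegrableOn (fun x => besselWeight l x * sphericalBessel l ((b * x) ^ 2) *
      (Real.exp (|(Complex.I * p : ℂ).im| * x) : ℂ)) (Ioi 0) := by
    have hS : Continuous fun x : ℝ => sphericalBessel l ((b * x) ^ 2) := by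
      have := continuous_sphericalBessel (l := l)
      fun_prop
    refine ((integrableOn_besselWeight_mul_exp hl (p := |p|) (by rwa [abs_abs])).ofReal.bdd_mul
      (c := 1) hS.aestronglyMeasurable (.of_forall fun x => ?_)).congr (.of_forall fun x => ?_)
    · simpa using norm_sphericalBessel_sq_le hl (b * x)
    · simp
      ring
  have hsq (x : ℝ) : -((p : ℂ) * x) ^ 2 = (Complex.I * p * x) ^ 2 := by
    rw [mul_assoc, mul_pow Complex.I, Complex.I_sq, neg_one_mul]
  simp_rw [hsq]
  rw [integral_mul_sphericalBessel_mul_sphericalBessel hl hint a, ← integral_const_mul]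
  refine integral_congr_ae ?_
  filter_upwards [ae_gegenbauerMeasure_mem_Icc l] with v hv
  obtain ⟨g, hg, him⟩ := exists_sq_eq_law_of_cosines_abs_im_le (Complex.I * p) a hv
  have hp' : |g.im| < 1 := him.trans_lt (by simpa using hp)
  simp_rw [← hg, ← mul_pow, mul_assoc (besselWeight l _ : ℂ),
    mul_comm (sphericalBessel l ((b * _) ^ 2))]
  rw [integral_besselWeight_mul_sphericalBessel_mul_sphericalBessel hl hp', hg]
  rw [mul_pow Complex.I, Complex.I_sq]
  ring_nf

end HankelTransforms

section EulerOperator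

variable {a : ℕ → ℝ}

lemma summable_natCast_mul_mul_pow {R : ℝ} (ha : Summable fun n => R ^ n * ‖a n‖) {t : ℝ}
    (ht : |t| < R) : Summable fun n : ℕ => (n : ℝ) * (a n * t ^ n) := by
  have hRt : 0 < R - |t| := sub_pos.2 ht
  refine .of_norm_bounded ((ha.div_const (R - |t|)).mul_left |t|) fun n => ?_
  rcases n with _ | n
  · simpa using by positivity
  rw [norm_mul, norm_mul, norm_pow, RCLike.norm_natCast, Real.norm_eq_abs t, mul_div_assoc',
    le_div_iff₀ hRt]
  calc (n + 1 : ℕ) * (‖a (n + 1)‖ * |t| ^ (n + 1)) * (R - |t|)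
      = |t| * (((n + 1 : ℕ) * |t| ^ (n + 1 - 1) * (R - |t|)) * ‖a (n + 1)‖) := by
        rw [Nat.add_sub_cancel]; ring
    _ ≤ |t| * (R ^ (n + 1) * ‖a (n + 1)‖) := by
        gcongr
        exact natCast_mul_pow_sub_one_mul_le (abs_nonneg t) ht.le (n + 1)

theorem hasSum_natCast_add_mul_eulerOp {f : ℝ → ℝ}
    (hf : ∀ s ∈ Ioo (-1 : ℝ) 1, HasSum (fun n => a n * s ^ n) (f s)) (c : ℝ) {t : ℝ}
    (ht : t ∈ Ioo (-1 : ℝ) 1) :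
    HasSum (fun n => (n + c) * (a n * t ^ n)) (eulerOp f t + c * f t) := by
  obtain ⟨R, htR, hR1⟩ := exists_between (abs_lt.2 ht)
  have hR0 : 0 ≤ R := (abs_nonneg t).trans htR.le
  have ha : Summable fun n => R ^ n * ‖a n‖ := by
    refine (hf R ⟨by linarith, hR1⟩).summable.norm.congr fun n => ?_
    rw [norm_mul, norm_pow, Real.norm_of_nonneg hR0, mul_comm]
  have hderiv : HasDerivAt f (∑' n : ℕ, t ^ n • ((n + 1 : ℝ) • a (n + 1))) t := by
    refine (hasDerivAt_tsum_pow_smul ha htR).congr_of_eventuallyEq ?_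
    filter_upwards [Ioo_mem_nhds ht.1 ht.2] with s hs
    simp [← (hf s hs).tsum_eq, mul_comm]
  have hsum := summable_natCast_mul_mul_pow ha htR
  have heuler : eulerOp f t = ∑' n : ℕ, (n : ℝ) * (a n * t ^ n) := by
    rw [eulerOp, hderiv.deriv, hsum.tsum_eq_zero_add, ← tsum_mul_left, Nat.cast_zero, zero_mul,
      zero_add]
    refine tsum_congr fun n => ?_
    push_cast [smul_eq_mul]
    ring
  rw [heuler]
  exact (hsum.hasSum.add ((hf t ht).mul_left c)).congr_fun fun n => add_mul _ _ _

end EulerOperator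

/-- The integral `I_{μ,ν}(s, ϑ, φ)` of a product of four normalized Bessel functions. -/
noncomputable def besselIntegral (μ ν s ϑ φ : ℝ) : ℝ :=
  ∫ x in Ioi (0 : ℝ), besselIt (μ / 2) (s * x / (1 - s)) * besselKt (ν / 2) (x / (1 - s))
    * besselJt (μ / 2) (Real.sin ϑ / (Real.cos ϑ + Real.cos φ) * x)
    * besselJt (ν / 2) (Real.sin φ / (Real.cos ϑ + Real.cos φ) * x) * x ^ (μ + ν + 1)

section BesselIntegral

variable {l : ℝ}

lemma ofReal_besselJt_eq_sphericalBessel (hl : 0 < l) (x : ℝ) :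
    ((besselJt (l - 1 / 2) x : ℝ) : ℂ) = sphericalBessel l (x ^ 2) / Real.Gamma (l + 1 / 2) := by
  have hΓ : (Real.Gamma (l + 1 / 2) : ℂ) ≠ 0 :=
    Complex.ofReal_ne_zero.2 (Gamma_pos_of_pos (by positivity)).ne'
  rw [besselJt_eq_besselClifford, ofReal_besselClifford, sphericalBessel,
    mul_div_cancel_left₀ _ hΓ]
  push_cast
  rfl

lemma ofReal_besselIt_eq_sphericalBessel (hl : 0 < l) (x : ℝ) :
    ((besselIt (l - 1 / 2) x : ℝ) : ℂ) = sphericalBessel l (-x ^ 2) / Real.Gamma (l + 1 / 2) := by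
  have hΓ : (Real.Gamma (l + 1 / 2) : ℂ) ≠ 0 :=
    Complex.ofReal_ne_zero.2 (Gamma_pos_of_pos (by positivity)).ne'
  rw [besselIt_eq_besselClifford, ofReal_besselClifford, sphericalBessel,
    mul_div_cancel_left₀ _ hΓ, neg_div, neg_neg]
  push_cast
  rfl

lemma besselIt_neg (α x : ℝ) : besselIt α (-x) = besselIt α x := by
  rw [besselIt_eq_besselClifford, besselIt_eq_besselClifford, neg_sq]

lemma besselKt_mul_rpow_eq_besselWeight (l : ℝ) {x : ℝ} (hx : 0 < x) :
    besselKt (l - 1 / 2) x * x ^ (4 * l - 1) = 2 ^ (2 * l) / 4 * besselWeight l x := by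
  rw [besselKt_eq_besselKIntegral _ hx, besselWeight, show -(2 * (l - 1 / 2)) = 1 - 2 * l by ring,
    div_rpow hx.le two_pos.le, rpow_sub hx, rpow_sub two_pos,
    show 4 * l - 1 = 2 * l + 2 * l - 1 by ring, rpow_sub hx (2 * l + 2 * l), rpow_add hx,
    rpow_one, rpow_one]
  field_simp
  norm_num

lemma ofReal_bessel_product_eq_sphericalBessel (hl : 0 < l) (p a b : ℝ) {x : ℝ} (hx : 0 < x) :
    ((besselIt (l - 1 / 2) (p * x) * besselKt (l - 1 / 2) x * besselJt (l - 1 / 2) (a * x)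
        * besselJt (l - 1 / 2) (b * x) * x ^ (4 * l - 1) : ℝ) : ℂ)
      = ((2 ^ (2 * l) / 4 / Real.Gamma (l + 1 / 2) ^ 3 : ℝ) : ℂ) *
        (besselWeight l x * sphericalBessel l ((b * x) ^ 2) *
          (sphericalBessel l (-(p * x) ^ 2) * sphericalBessel l ((a * x) ^ 2))) := by
  rw [show besselIt (l - 1 / 2) (p * x) * besselKt (l - 1 / 2) x * besselJt (l - 1 / 2) (a * x)
        * besselJt (l - 1 / 2) (b * x) * x ^ (4 * l - 1)
      = besselIt (l - 1 / 2) (p * x) * besselJt (l - 1 / 2) (a * x) * besselJt (l - 1 / 2) (b * x)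
        * (besselKt (l - 1 / 2) x * x ^ (4 * l - 1)) by ring,
    besselKt_mul_rpow_eq_besselWeight l hx, Complex.ofReal_mul, Complex.ofReal_mul,
    Complex.ofReal_mul, ofReal_besselIt_eq_sphericalBessel hl,
    ofReal_besselJt_eq_sphericalBessel hl, ofReal_besselJt_eq_sphericalBessel hl]
  push_cast
  ring

lemma besselIntegral_neg_eq_rpow_mul_integral (l : ℝ) {t : ℝ} (ht : -1 < t) (ϑ φ : ℝ) :
    besselIntegral (2 * l - 1) (2 * l - 1) (-t) ϑ φ = (1 + t) ^ (4 * l) *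
      ∫ x in Ioi (0 : ℝ), besselIt (l - 1 / 2) (t * x) * besselKt (l - 1 / 2) x
        * besselJt (l - 1 / 2) (Real.sin ϑ * (1 + t) / (Real.cos ϑ + Real.cos φ) * x)
        * besselJt (l - 1 / 2) (Real.sin φ * (1 + t) / (Real.cos ϑ + Real.cos φ) * x)
        * x ^ (4 * l - 1) := by
  have ht1 : 0 < 1 + t := by linarith
  have hscale (g : ℝ → ℝ) :
      ∫ x in Ioi (0 : ℝ), g x = (1 + t) * ∫ x in Ioi (0 : ℝ), g ((1 + t) * x) := by
    rw [integral_comp_mul_left_Ioi g 0 ht1, mul_zero, smul_eq_mul, mul_inv_cancel_left₀ ht1.ne']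
  have hpow : (1 + t) ^ (4 * l) = (1 + t) * (1 + t) ^ (4 * l - 1) := by
    rw [mul_comm (1 + t), ← rpow_add_one ht1.ne', sub_add_cancel]
  rw [besselIntegral, hscale, hpow, mul_assoc, ← integral_const_mul (_ ^ _)]
  congr 1
  refine setIntegral_congr_fun measurableSet_Ioi fun x (hx : 0 < x) => ?_
  have hK : (1 + t) * x / (1 - -t) = x := by rw [sub_neg_eq_add, mul_div_cancel_left₀ _ ht1.ne']
  have hI : -t * ((1 + t) * x) / (1 - -t) = -(t * x) := by rw [mul_div_assoc, hK, neg_mul]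
  have hmul (r c : ℝ) : r / c * ((1 + t) * x) = r * (1 + t) / c * x := by ring
  have hindex : (2 * l - 1) / 2 = l - 1 / 2 := by ring
  have hexponent : 2 * l - 1 + (2 * l - 1) + 1 = 4 * l - 1 := by ring
  simp only [hI, hK, hmul, hindex, hexponent, besselIt_neg, mul_rpow ht1.le hx.le]
  ring

lemma ofReal_mul_cpow {r : ℝ} (hr : 0 < r) (z c : ℂ) :
    ((r : ℂ) * z) ^ c = (r : ℂ) ^ c * z ^ c := by
  have hr0 : (r : ℂ) ≠ 0 := Complex.ofReal_ne_zero.2 hr.ne'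
  rcases eq_or_ne z 0 with rfl | hz
  · rcases eq_or_ne c 0 with rfl | hc
    · simp
    · simp [hc]
  · rw [Complex.cpow_def_of_ne_zero (mul_ne_zero hr0 hz), Complex.cpow_def_of_ne_zero hr0,
      Complex.cpow_def_of_ne_zero hz, Complex.log_ofReal_mul hr hz, Complex.ofReal_log hr.le,
      add_mul, Complex.exp_add]

lemma law_of_cosines_base_eq {x sx y sy t v : ℂ} (hx : x ^ 2 + sx ^ 2 = 1)
    (hy : y ^ 2 + sy ^ 2 = 1) (hxy : x + y ≠ 0) :
    (1 + ((sx * (1 + t) / (x + y)) ^ 2 - t ^ 2 - 2 * Complex.I * t * (sx * (1 + t) / (x + y)) * v)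
        - (sy * (1 + t) / (x + y)) ^ 2) ^ 2 + 4 * (sy * (1 + t) / (x + y)) ^ 2
      = (2 * (1 + t) / (x + y)) ^ 2 *
        (1 - 2 * y * (t * (x + Complex.I * sx * v)) + (t * (x + Complex.I * sx * v)) ^ 2) := by
  have hlin : 1 + ((sx * (1 + t) / (x + y)) ^ 2 - t ^ 2
        - 2 * Complex.I * t * (sx * (1 + t) / (x + y)) * v) - (sy * (1 + t) / (x + y)) ^ 2
      = 2 * (1 + t) / (x + y) * (y - t * (x + Complex.I * sx * v)) := by
    field_simp
    linear_combination (1 + t) ^ 2 * (hx - hy)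
  rw [hlin]
  linear_combination (2 * (1 + t) / (x + y)) ^ 2 * hy

lemma integral_law_of_cosines_cpow (l : ℝ) {x sx y sy t : ℝ} (hx : x ^ 2 + sx ^ 2 = 1)
    (hy : y ^ 2 + sy ^ 2 = 1) (hxy : 0 < x + y) (ht : -1 < t) :
    ∫ v : ℝ, ((1 + ((sx * (1 + t) / (x + y) : ℝ) ^ 2 - t ^ 2
          - 2 * Complex.I * t * (sx * (1 + t) / (x + y) : ℝ) * v)
        - (sy * (1 + t) / (x + y) : ℝ) ^ 2) ^ 2 + 4 * (sy * (1 + t) / (x + y) : ℝ) ^ 2)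
          ^ (-(l : ℂ)) ∂(gegenbauerMeasure l)
      = (((2 * (1 + t) / (x + y)) ^ (-(2 * l)) : ℝ) : ℂ) *
        ∫ v : ℝ, (1 - 2 * y * (t * (x + Complex.I * sx * v))
          + (t * (x + Complex.I * sx * v)) ^ 2) ^ (-(l : ℂ)) ∂(gegenbauerMeasure l) := by
  have ht1 : 0 < 1 + t := by linarith
  have hr : 0 < 2 * (1 + t) / (x + y) := by positivity
  have hrpow : (2 * (1 + t) / (x + y)) ^ (-(2 * l)) = ((2 * (1 + t) / (x + y)) ^ 2) ^ (-l) := by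
    rw [← rpow_natCast, ← rpow_mul hr.le]
    norm_num
  rw [← integral_const_mul, hrpow, Complex.ofReal_cpow (by positivity)]
  congr with v
  rw [Complex.ofReal_neg, ← ofReal_mul_cpow (by positivity)]
  push_cast
  rw [law_of_cosines_base_eq (by exact_mod_cast hx) (by exact_mod_cast hy)
    (by exact_mod_cast hxy.ne')]

theorem besselIntegral_neg_eq_integral_cpow (hl : 0 < l) {t : ℝ} (ht : t ∈ Ioo (-1 : ℝ) 1)
    {ϑ φ : ℝ} (hpos : 0 < Real.cos ϑ + Real.cos φ) :
    ((besselIntegral (2 * l - 1) (2 * l - 1) (-t) ϑ φ : ℝ) : ℂ)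
      = (((1 + t) ^ (4 * l) * (2 * (1 + t) / (Real.cos ϑ + Real.cos φ)) ^ (-(2 * l))
            * (2 ^ (2 * l)) ^ 2 / 4 * Real.Gamma (2 * l) / Real.Gamma (l + 1 / 2) ^ 2 : ℝ) : ℂ) *
        ∫ v : ℝ, (1 - 2 * Real.cos φ * (t * (Real.cos ϑ + Complex.I * Real.sin ϑ * v))
          + (t * (Real.cos ϑ + Complex.I * Real.sin ϑ * v)) ^ 2) ^ (-(l : ℂ))
            ∂(gegenbauerMeasure l) := by
  have hΓ : (Real.Gamma (l + 1 / 2) : ℂ) ≠ 0 :=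
    Complex.ofReal_ne_zero.2 (Gamma_pos_of_pos (by positivity)).ne'
  rw [besselIntegral_neg_eq_rpow_mul_integral l ht.1, Complex.ofReal_mul,
    ← integral_complex_ofReal, setIntegral_congr_fun measurableSet_Ioi fun x hx =>
      ofReal_bessel_product_eq_sphericalBessel hl _ _ _ hx, integral_const_mul,
    integral_besselWeight_mul_three_sphericalBessel hl (abs_lt.2 ht),
    integral_law_of_cosines_cpow l (Real.cos_sq_add_sin_sq ϑ) (Real.cos_sq_add_sin_sq φ) hpos ht.1]
  simp only [Complex.ofReal_mul, Complex.ofReal_div, Complex.ofReal_pow]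
  field_simp [hΓ]

lemma poissonKernel_const_mul_eq (hl : 0 < l) {t : ℝ} (ht : -1 < t) {c : ℝ} (hc : 0 < c) :
    Real.pi / 2 ^ (8 * l - 4) * (c / 2) ^ (-(2 * l)) * ((1 + t) ^ (-(2 * l)) *
        ((1 + t) ^ (4 * l) * (2 * (1 + t) / c) ^ (-(2 * l)) * (2 ^ (2 * l)) ^ 2 / 4
          * Real.Gamma (2 * l) / Real.Gamma (l + 1 / 2) ^ 2))
      = Real.Gamma l ^ 2 / Real.Gamma (2 * l) := by
  have ht1 : 0 < 1 + t := by linarith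
  have hΓ : 0 < Real.Gamma (2 * l) := Gamma_pos_of_pos (by positivity)
  have hΓ' : 0 < Real.Gamma (l + 1 / 2) := Gamma_pos_of_pos (by positivity)
  have hduplication : Real.Gamma l ^ 2 * Real.Gamma (l + 1 / 2) ^ 2
      = Real.Gamma (2 * l) ^ 2 * (2 / 2 ^ (2 * l)) ^ 2 * Real.pi := by
    rw [← mul_pow, Real.Gamma_mul_Gamma_add_half, rpow_sub two_pos, rpow_one, mul_pow, mul_pow,
      sq_sqrt pi_pos.le]
  have hpow : (2 : ℝ) ^ (8 * l - 4) = (2 ^ (2 * l)) ^ 4 / 16 := by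
    rw [rpow_sub two_pos, ← rpow_natCast, ← rpow_mul two_pos.le]
    norm_num
    ring_nf
  have hpow' : (1 + t) ^ (4 * l) = ((1 + t) ^ (2 * l)) ^ 2 := by
    rw [← rpow_natCast, ← rpow_mul ht1.le]
    ring_nf
  rw [eq_div_iff hΓ.ne', ← mul_left_inj' (pow_pos hΓ' 2).ne', hduplication, hpow, hpow',
    rpow_neg (by positivity), rpow_neg ht1.le, rpow_neg (by positivity),
    div_rpow hc.le two_pos.le, div_rpow (by positivity) hc.le, mul_rpow two_pos.le ht1.le]
  field_simp
  norm_num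

theorem hasSum_poissonKernel_coeff (hl : 0 < l) {ϑ φ t : ℝ}
    (hpos : 0 < Real.cos ϑ + Real.cos φ) (ht : t ∈ Ioo (-1 : ℝ) 1) :
    HasSum (fun n : ℕ => n.factorial / Real.Gamma (n + 2 * l) * gegenbauerCt n l (Real.cos ϑ)
        * gegenbauerCt n l (Real.cos φ) * t ^ n)
      (Real.pi / 2 ^ (8 * l - 4) * ((Real.cos ϑ + Real.cos φ) / 2) ^ (-(2 * l))
        * ((1 + t) ^ (-(2 * l)) * besselIntegral (2 * l - 1) (2 * l - 1) (-t) ϑ φ)) := by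
  have hsum := hasSum_gegenbauerCt_mul_gegenbauerCt hl (Real.cos_sq_add_sin_sq ϑ)
    (Real.cos_sq_add_sin_sq φ) (abs_lt.2 ht)
  have hconst := congrArg (fun r : ℝ => (r : ℂ)) (poissonKernel_const_mul_eq hl ht.1 hpos)
  rw [← Complex.hasSum_ofReal]
  convert hsum using 1
  rw [Complex.ofReal_mul, Complex.ofReal_mul, Complex.ofReal_mul,
    besselIntegral_neg_eq_integral_cpow hl ht hpos, ← Complex.ofReal_pow, ← Complex.ofReal_div,
    ← hconst]
  simp only [Complex.ofReal_mul]
  ring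

end BesselIntegral

theorem poissonKernel_formula_general {l : ℝ} (hl : 0 < l) {ϑ φ : ℝ}
    (hpos : 0 < Real.cos ϑ + Real.cos φ) {t : ℝ} (ht : t ∈ Ioo (-1 : ℝ) 1) :
    HasSum
      (fun n : ℕ => n.factorial * ((n : ℝ) + l) / Real.Gamma (n + 2 * l)
        * gegenbauerCt n l (Real.cos ϑ) * gegenbauerCt n l (Real.cos φ) * t ^ n)
      (Real.pi / 2 ^ (8 * l - 4) * ((Real.cos ϑ + Real.cos φ) / 2) ^ (-(2 * l))
        * (eulerOp (fun s => (1 + s) ^ (-(2 * l))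
              * besselIntegral (2 * l - 1) (2 * l - 1) (-s) ϑ φ) t
          + l * ((1 + t) ^ (-(2 * l)) * besselIntegral (2 * l - 1) (2 * l - 1) (-t) ϑ φ))) := by
  set C := Real.pi / 2 ^ (8 * l - 4) * ((Real.cos ϑ + Real.cos φ) / 2) ^ (-(2 * l))
  have hC : C ≠ 0 := by positivity
  have hsum (s : ℝ) (hs : s ∈ Ioo (-1 : ℝ) 1) :=
    ((hasSum_poissonKernel_coeff hl hpos hs).mul_left C⁻¹).congr_fun
      (g := fun n : ℕ => C⁻¹ * (n.factorial / Real.Gamma (n + 2 * l)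
        * gegenbauerCt n l (Real.cos ϑ) * gegenbauerCt n l (Real.cos φ)) * s ^ n) fun n => by ring
  simp only [C, inv_mul_cancel_left₀ hC] at hsum
  refine ((hasSum_natCast_add_mul_eulerOp hsum l ht).mul_left C).congr_fun fun n => ?_
  simp only [C]
  field_simp

/-- **Poisson kernel formula** for the Gegenbauer polynomials in terms of
`I_{2λ−1,2λ−1}(−t,ϑ,φ)`. -/
theorem poissonKernel_formula (l : ℝ) (hl : 0 < l) (hl2 : ∃ k : ℤ, (k : ℝ) = 2 * l)
    (ϑ φ : ℝ) (hϑ : ϑ ∈ Set.Icc (0 : ℝ) Real.pi) (hφ : φ ∈ Set.Icc (0 : ℝ) Real.pi)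
    (hpos : Real.cos ϑ + Real.cos φ > 0) (t : ℝ) (ht : t ∈ Set.Ioo (-1 : ℝ) 1) :
    HasSum
      (fun n : ℕ =>
        n.factorial * ((n : ℝ) + l) / Real.Gamma (n + 2 * l)
          * gegenbauerCt n l (Real.cos ϑ) * gegenbauerCt n l (Real.cos φ) * t ^ n)
      (Real.pi / (2 : ℝ) ^ (8 * l - 4) * ((Real.cos ϑ + Real.cos φ) / 2) ^ (-(2 * l))
        * (t * deriv
              (fun s : ℝ => (1 + s) ^ (-(2 * l))
                * ∫ x in Set.Ioi (0 : ℝ),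
                    besselIt ((2 * l - 1) / 2) ((-s) * x / (1 - (-s)))
                      * besselKt ((2 * l - 1) / 2) (x / (1 - (-s)))
                      * besselJt ((2 * l - 1) / 2)
                          (Real.sin ϑ / (Real.cos ϑ + Real.cos φ) * x)
                      * besselJt ((2 * l - 1) / 2)
                          (Real.sin φ / (Real.cos ϑ + Real.cos φ) * x)
                      * x ^ ((2 * l - 1) + (2 * l - 1) + 1)) t
            + l * ((1 + t) ^ (-(2 * l))
                * ∫ x in Set.Ioi (0 : ℝ),
                    besselIt ((2 * l - 1) / 2) ((-t) * x / (1 - (-t)))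
                      * besselKt ((2 * l - 1) / 2) (x / (1 - (-t)))
                      * besselJt ((2 * l - 1) / 2)
                          (Real.sin ϑ / (Real.cos ϑ + Real.cos φ) * x)
                      * besselJt ((2 * l - 1) / 2)
                          (Real.sin φ / (Real.cos ϑ + Real.cos φ) * x)
                      * x ^ ((2 * l - 1) + (2 * l - 1) + 1)))) := by
  exact poissonKernel_formula_general hl hpos ht
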